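/- Let Λ be a finite-dimensional basic algebra, M := mod Λ, m a nonnegative integer, and let (C(k))_{k∈ℤ} be a contravariantly finite ICE-sequence of length m+1 in M. Define F_{m+1} := 0 and, by reverse induction, F_k := (C(1−k)^⊥ ∩ W_L(C(−k))) * F_{k+1} for 1 ≤ k ≤ m. Then the cogen-preordered basic τ⁻¹-rigid module corresponding to (C(k))_{k∈ℤ} under the inverse of the bijection ν∘φ (Corollary on contravariantly finite ICE-sequences) is (X₁,…,X_m), where X_k = (I_s(F_k))/F_{k+1} for 1 ≤ k ≤ m. -/

import Mathlib

/-! Write `Δ_{≥k} = X k ⊕ … ⊕ X m`.  Since `Δ_{≥1}` is `τ⁻¹`-rigid, `(⊥Δ_{≥k}, Cogen Δ_{≥k})` is a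
torsion pair for every `k` (`exists_torsion`).  The theorem follows from the equality
`F k = Cogen Δ_{≥k}` (`eq_cogen`) together with a computation of `I_s(Cogen Δ_{≥k})`.

For the equality, `C(1-k) = (τ⁻¹Δ_{>k})^⊥ ∩ ⊥Δ_{≥k}`, and `W_L(C(-k))` lies between
`(τ⁻¹Δ_{>k})^⊥ ∩ ⊥Δ_{>k}` and `(τ⁻¹Δ_{>k})^⊥` (`WL_bounds`).  These two bounds are all that is needed
of `W_L(C(-k))`: by `starProd_eq_cogen`, for any class `W` between them
`(C(1-k)^⊥ ∩ W) * Cogen Δ_{>k} = Cogen Δ_{≥k}`.  The inclusion `⊆` holds because the torsion part of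
an object of `C(1-k)^⊥ ∩ W` lies in `C(1-k)` and hence vanishes; `⊇` comes from the canonical sequence
of an object of `Cogen Δ_{≥k}` for the torsion pair of `Δ_{>k}`.  The upper bound
(`WL_subset_perpTauInv`) uses that `X (k+1)` is split injective in `Cogen Δ_{>k}`.

For the split injectives: an indecomposable summand `Y` of `X k` is not cogenerated by its complement
in `Δ_{≥k}`, so it is split injective in `Cogen Δ_{≥k}` because the radical of `End Y` is nilpotent
(`splitInj_of_not_cogen`).  Hence `I_s(Cogen Δ_{≥k}) = X k ⊕ V₁` with `V₁` a direct summand of `Δ_{>k}`.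
The summands of `V₁` lie in `F (k+1) = Cogen Δ_{>k}` and those of `X k` do not
(`exists_minSplitInj`). -/

/- Framework: the category `mod Λ` of finitely generated modules over a
finite-dimensional algebra `Λ`, modeled concretely via `ModuleCat Λ` together
with the finiteness predicate `Module.Finite`.  Subcategories are sets of
(bundled) modules.  `τ⁻¹`-rigidity and `(τ⁻¹X)^⊥` are encoded via the
Auslander–Smalø characterizations
`Hom(τ⁻¹X, M) = 0 ↔ Ext¹(M', X) = 0 for all M' ∈ Cogen M`. -/

open Function

noncomputable section

namespace Paper

variable (Λ : Type) [Ring Λ]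

abbrev Mdl := ModuleCat.{0} Λ

/-- The class of all finitely generated `Λ`-modules, i.e. `mod Λ` itself. -/
def modAll : Set (Mdl Λ) := {M | Module.Finite Λ ↥M}

/-- Isomorphism of modules. -/
def IsoM (M N : Mdl Λ) : Prop := Nonempty (↥M ≃ₗ[Λ] ↥N)

/-- Direct sum of two modules. -/
def dsum (M N : Mdl Λ) : Mdl Λ := ModuleCat.of Λ (↥M × ↥N)

/-- `M` is a direct summand of `N`. -/
def IsSummand (M N : Mdl Λ) : Prop :=
  ∃ (i : ↥M →ₗ[Λ] ↥N) (p : ↥N →ₗ[Λ] ↥M), p.comp i = LinearMap.id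

/-- The additive closure `add X`: direct summands of finite direct sums of copies of `X`. -/
def addOf (X : Mdl Λ) : Set (Mdl Λ) :=
  {M | ∃ n : ℕ, IsSummand Λ M (ModuleCat.of Λ (Fin n → ↥X))}

/-- `M` is a zero object. -/
def IsZeroM (M : Mdl Λ) : Prop := Subsingleton ↥M

/-- `M` is indecomposable (and nonzero). -/
def Indec (M : Mdl Λ) : Prop :=
  ¬ IsZeroM Λ M ∧ ∀ A B : Mdl Λ, IsoM Λ M (dsum Λ A B) → IsZeroM Λ A ∨ IsZeroM Λ B

/-- `X` is basic: no nonzero module `N` with `N ⊕ N` a direct summand of `X`. -/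
def IsBasic (X : Mdl Λ) : Prop :=
  ∀ N : Mdl Λ, ¬ IsZeroM Λ N → ¬ IsSummand Λ (dsum Λ N N) X

/-- `W` is (up to isomorphism) the module `Z/D` obtained from `Z` by deleting all
direct summands lying in `D`. -/
def IsDeleted (Z : Mdl Λ) (D : Set (Mdl Λ)) (W : Mdl Λ) : Prop :=
  ∃ Z' : Mdl Λ, IsoM Λ Z (dsum Λ W Z') ∧
    (∀ V, Indec Λ V → IsSummand Λ V Z' → V ∈ D) ∧
    (∀ V, Indec Λ V → IsSummand Λ V W → V ∉ D)

/-- `Cogen 𝒞` for a class of modules `𝒞`. -/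
def CogenS (C : Set (Mdl Λ)) : Set (Mdl Λ) :=
  {M | Module.Finite Λ ↥M ∧ ∃ Y ∈ C, ∃ f : ↥M →ₗ[Λ] ↥Y, Injective f}

/-- `Cogen X` for a module `X`. -/
def Cogen (X : Mdl Λ) : Set (Mdl Λ) := CogenS Λ (addOf Λ X)

/-- `𝒞^⊥ = {M | Hom(𝒞, M) = 0}`. -/
def perpR (C : Set (Mdl Λ)) : Set (Mdl Λ) :=
  {M | Module.Finite Λ ↥M ∧ ∀ X ∈ C, ∀ f : ↥X →ₗ[Λ] ↥M, f = 0}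

/-- `⊥𝒞 = {M | Hom(M, 𝒞) = 0}`. -/
def perpL (C : Set (Mdl Λ)) : Set (Mdl Λ) :=
  {M | Module.Finite Λ ↥M ∧ ∀ X ∈ C, ∀ f : ↥M →ₗ[Λ] ↥X, f = 0}

/-- `0 → A → E → B → 0` is a short exact sequence. -/
def IsSESeq {A E B : Mdl Λ} (f : ↥A →ₗ[Λ] ↥E) (g : ↥E →ₗ[Λ] ↥B) : Prop :=
  Injective f ∧ Surjective g ∧ LinearMap.range f = LinearMap.ker g

/-- `Ext¹(A, B) = 0`: every short exact sequence `0 → B → E → A → 0` splits. -/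
def Ext1Zero (A B : Mdl Λ) : Prop :=
  ∀ (E : Mdl Λ) (f : ↥B →ₗ[Λ] ↥E) (g : ↥E →ₗ[Λ] ↥A),
    IsSESeq Λ f g → ∃ s : ↥A →ₗ[Λ] ↥E, g.comp s = LinearMap.id

/-- `X` is `τ⁻¹`-rigid, i.e. `Hom(τ⁻¹X, X) = 0`; encoded via the Auslander–Smalø
characterization: `Ext¹(Y, X) = 0` for every `Y ∈ Cogen X`. -/
def TauInvRigid (X : Mdl Λ) : Prop :=
  Module.Finite Λ ↥X ∧ ∀ Y ∈ Cogen Λ X, Ext1Zero Λ Y X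

/-- The torsion-free class `(τ⁻¹X)^⊥`; encoded via Auslander–Smalø:
`Hom(τ⁻¹X, M) = 0` iff `Ext¹(N, X) = 0` for all `N ∈ Cogen M`. -/
def perpTauInv (X : Mdl Λ) : Set (Mdl Λ) :=
  {M | Module.Finite Λ ↥M ∧ ∀ N ∈ Cogen Λ M, Ext1Zero Λ N X}

/-- The zero subcategory `0`. -/
def zeroSubcat : Set (Mdl Λ) := {M | IsZeroM Λ M}

/-- `C` is a torsion-free class of the abelian (wide, extension-closed)
subcategory `W`: contained in `W`, contains `0`, closed under extensions (taken
in `W`) and under submodules lying in `W`. -/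
def IsTorfIn (W C : Set (Mdl Λ)) : Prop :=
  C ⊆ W ∧ (∃ Z ∈ C, IsZeroM Λ Z) ∧
  (∀ (A E B : Mdl Λ) (f : ↥A →ₗ[Λ] ↥E) (g : ↥E →ₗ[Λ] ↥B),
      IsSESeq Λ f g → A ∈ C → B ∈ C → E ∈ W → E ∈ C) ∧
  (∀ M N : Mdl Λ, M ∈ W → N ∈ C → (∃ f : ↥M →ₗ[Λ] ↥N, Injective f) → M ∈ C)

/-- `C` is a torsion-free class of `mod Λ`. -/
def IsTorf (C : Set (Mdl Λ)) : Prop := IsTorfIn Λ (modAll Λ) C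

/-- `C` is a torsion class of the abelian (wide) subcategory `W`. -/
def IsTorsIn (W C : Set (Mdl Λ)) : Prop :=
  C ⊆ W ∧ (∃ Z ∈ C, IsZeroM Λ Z) ∧
  (∀ (A E B : Mdl Λ) (f : ↥A →ₗ[Λ] ↥E) (g : ↥E →ₗ[Λ] ↥B),
      IsSESeq Λ f g → A ∈ C → B ∈ C → E ∈ W → E ∈ C) ∧
  (∀ M N : Mdl Λ, M ∈ C → N ∈ W → (∃ g : ↥M →ₗ[Λ] ↥N, Surjective g) → N ∈ C)

/-- Contravariant finiteness of `C` in `B`: every object of `B` admits a left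
`C`-approximation. -/
def ContraFinIn (C B : Set (Mdl Λ)) : Prop :=
  ∀ X ∈ B, ∃ X' ∈ C, ∃ h : ↥X →ₗ[Λ] ↥X',
    ∀ C' ∈ C, ∀ f : ↥X →ₗ[Λ] ↥C', ∃ g : ↥X' →ₗ[Λ] ↥C', g.comp h = f

/-- Covariant finiteness of `C` in `B`: every object of `B` admits a right
`C`-approximation. -/
def CovFinIn (C B : Set (Mdl Λ)) : Prop :=
  ∀ X ∈ B, ∃ X' ∈ C, ∃ h : ↥X' →ₗ[Λ] ↥X,
    ∀ C' ∈ C, ∀ f : ↥C' →ₗ[Λ] ↥X, ∃ g : ↥C' →ₗ[Λ] ↥X', h.comp g = f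

def FunctFinIn (C B : Set (Mdl Λ)) : Prop := ContraFinIn Λ C B ∧ CovFinIn Λ C B

def ContraFin (C : Set (Mdl Λ)) : Prop := ContraFinIn Λ C (modAll Λ)
def CovFin (C : Set (Mdl Λ)) : Prop := CovFinIn Λ C (modAll Λ)
def FunctFin (C : Set (Mdl Λ)) : Prop := ContraFin Λ C ∧ CovFin Λ C

/-- `F'` covers `F` in the lattice of torsion-free classes of `W`. -/
def CoversIn (W F' F : Set (Mdl Λ)) : Prop :=
  IsTorfIn Λ W F ∧ IsTorfIn Λ W F' ∧ F ⊂ F' ∧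
    ∀ G, IsTorfIn Λ W G → F ⊂ G → G ⊆ F' → G = F'

/-- `pop^G(F)` computed in `torf W`: the join of `F` together with all covers of
`F` contained in `G`, realized as the intersection of all torsion-free classes
of `W` containing them. -/
def popIn (W G F : Set (Mdl Λ)) : Set (Mdl Λ) :=
  ⋂₀ {H | IsTorfIn Λ W H ∧ F ⊆ H ∧ ∀ F', CoversIn Λ W F' F → F' ⊆ G → F' ⊆ H}

/-- `[Jlo, Jhi]` is a maximal join interval in the interval `[Ilo, Ihi]` of the
lattice of torsion-free classes of `W`. -/
def IsMaxJoinIn (W Jlo Jhi Ilo Ihi : Set (Mdl Λ)) : Prop :=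
  IsTorfIn Λ W Jlo ∧ IsTorfIn Λ W Jhi ∧ Ilo ⊆ Jlo ∧ Jlo ⊆ Jhi ∧ Jhi ⊆ Ihi ∧
    Jhi = popIn Λ W Ihi Jlo

/-- The direct sum `⊕_{a ≤ j ≤ b} X j`. -/
def seqSum (X : ℕ → Mdl Λ) (a b : ℕ) : Mdl Λ :=
  ModuleCat.of Λ ((j : Finset.Icc a b) → ↥(X j.1))

/-- `(X 1, …, X m)` is a cogen-preordered (basic) `τ⁻¹`-rigid module of length `m`. -/
def CogenPreordered (m : ℕ) (X : ℕ → Mdl Λ) : Prop :=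
  IsBasic Λ (seqSum Λ X 1 m) ∧ TauInvRigid Λ (seqSum Λ X 1 m) ∧
  ∀ k, 1 ≤ k → k ≤ m → ∀ Y, Indec Λ Y → IsSummand Λ Y (X k) →
    ∀ W, IsDeleted Λ (seqSum Λ X k m) (addOf Λ Y) W → Y ∉ Cogen Λ W

/-- `X` is cogen-minimal. -/
def CogenMinimal (X : Mdl Λ) : Prop :=
  ∀ Y, Indec Λ Y → IsSummand Λ Y X →
    ∀ W, IsDeleted Λ X (addOf Λ Y) W → Y ∉ Cogen Λ W

/-- `X` is a split injective object of `C`. -/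
def SplitInjIn (C : Set (Mdl Λ)) (X : Mdl Λ) : Prop :=
  X ∈ C ∧ ∀ Y ∈ C, ∀ f : ↥X →ₗ[Λ] ↥Y, Injective f →
    ∃ r : ↥Y →ₗ[Λ] ↥X, r.comp f = LinearMap.id

/-- `I` is the basic module `I_s(C)` whose additive closure consists of the
split injective objects of `C`. -/
def IsMinSplitInj (C : Set (Mdl Λ)) (I : Mdl Λ) : Prop :=
  IsBasic Λ I ∧ addOf Λ I = {X | SplitInjIn Λ C X}

/-- `C` is an ICE-closed subcategory of `mod Λ`. -/
def IsICE (C : Set (Mdl Λ)) : Prop :=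
  (∀ M ∈ C, Module.Finite Λ ↥M) ∧
  (∀ M N, IsoM Λ M N → M ∈ C → N ∈ C) ∧
  (∃ Z ∈ C, IsZeroM Λ Z) ∧
  (∀ (A E B : Mdl Λ) (f : ↥A →ₗ[Λ] ↥E) (g : ↥E →ₗ[Λ] ↥B),
      IsSESeq Λ f g → A ∈ C → B ∈ C → Module.Finite Λ ↥E → E ∈ C) ∧
  (∀ M N : Mdl Λ, M ∈ C → N ∈ C → ∀ f : ↥M →ₗ[Λ] ↥N,
      ModuleCat.of Λ ↥(LinearMap.range f) ∈ C ∧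
      ModuleCat.of Λ (↥N ⧸ LinearMap.range f) ∈ C)

/-- `W_L(C)`. -/
def WL (C : Set (Mdl Λ)) : Set (Mdl Λ) :=
  {X | X ∈ C ∧ ∀ Y ∈ C, ∀ f : ↥Y →ₗ[Λ] ↥X, ModuleCat.of Λ ↥(LinearMap.ker f) ∈ C}

/-- An ICE-sequence. -/
def IsICESeq (C : ℤ → Set (Mdl Λ)) : Prop :=
  ∀ k : ℤ, IsICE Λ (C k) ∧ IsTorsIn Λ (WL Λ (C k)) (C (k + 1))

/-- The ICE-sequence `C` has length `m`. -/
def ICESeqLen (C : ℤ → Set (Mdl Λ)) (m : ℕ) : Prop :=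
  C 1 = zeroSubcat Λ ∧ C (-(m : ℤ)) = modAll Λ

/-- The heart `G ∩ ⊥F` of an interval `[F, G]` of torsion-free classes. -/
def heart (F G : Set (Mdl Λ)) : Set (Mdl Λ) := G ∩ perpL Λ F

/-- The `τ⁻¹`-perpendicular category `J^d(X) = (τ⁻¹X)^⊥ ∩ ⊥X`. -/
def Jd (X : Mdl Λ) : Set (Mdl Λ) := perpTauInv Λ X ∩ perpL Λ (addOf Λ X)

/-- `B * C`: objects which are extensions of an object of `C` by an object of `B`. -/
def starProd (B C : Set (Mdl Λ)) : Set (Mdl Λ) :=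
  {E | ∃ Mb Mc : Mdl Λ, Mb ∈ B ∧ Mc ∈ C ∧
    ∃ (f : ↥Mb →ₗ[Λ] ↥E) (g : ↥E →ₗ[Λ] ↥Mc), IsSESeq Λ f g}

/-- The torsion submodule `t_X M`: the largest submodule of `M` lying in `⊥X`. -/
def tSub (X M : Mdl Λ) : Submodule Λ ↥M :=
  sSup {N : Submodule Λ ↥M | ∀ f : ↥N →ₗ[Λ] ↥X, f = 0}

/-- The torsion functor value `t_X M`. -/
def tMod (X M : Mdl Λ) : Mdl Λ := ModuleCat.of Λ ↥(tSub Λ X M)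

/-- `X` is a `τ⁻¹`-rigid object of the wide subcategory `W` (with respect to the
inverse AR translate of `W`); encoded via Auslander–Smalø in `W`, using
`Cogen_W X = Cogen X ∩ W` and `Ext¹_W = Ext¹`. -/
def TauInvRigidIn (W : Set (Mdl Λ)) (X : Mdl Λ) : Prop :=
  X ∈ W ∧ ∀ Y ∈ Cogen Λ X ∩ W, Ext1Zero Λ Y X

/-- `X` is cogen-minimal as an object of the wide subcategory `W`. -/
def CogenMinimalIn (W : Set (Mdl Λ)) (X : Mdl Λ) : Prop :=
  ∀ Y, Indec Λ Y → IsSummand Λ Y X →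
    ∀ Wd, IsDeleted Λ X (addOf Λ Y) Wd → Y ∉ Cogen Λ Wd ∩ W

end Paper

namespace Paper

variable (Λ : Type) [Ring Λ]

/-- The ICE-sequence `ν(φ(Δ))` associated to a cogen-preordered `τ⁻¹`-rigid module
`Δ = (X 1, …, X m)`: `C k = 0` for `k > 0`,
`C k = (τ⁻¹ Δ_{>1-k})^⊥ ∩ ⊥(Δ_{≥1-k})` for `-m < k ≤ 0`, and `C k = mod Λ` for
`k ≤ -m`. -/
def PhiRel (m : ℕ) (X : ℕ → Mdl Λ) (C : ℤ → Set (Mdl Λ)) : Prop :=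
  (∀ k : ℤ, 0 < k → C k = zeroSubcat Λ) ∧
  (∀ k : ℤ, -(m : ℤ) < k → k ≤ 0 →
    C k = perpTauInv Λ (seqSum Λ X (2 - k).toNat m) ∩
            perpL Λ (addOf Λ (seqSum Λ X (1 - k).toNat m))) ∧
  (∀ k : ℤ, k ≤ -(m : ℤ) → C k = modAll Λ)

end Paper

namespace Paper

/-! ### Direct summands and cogeneration -/

section Cogeneration

variable {Λ : Type} [Ring Λ]

/-- `X` separates the points of `M`: every nonzero element of `M` survives under some map
`M → X`.  For `M` of finite length this is the same as `M ∈ Cogen X`; see `mem_cogen_iff`. -/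
def Sep (M X : Mdl Λ) : Prop := ∀ x : M, x ≠ 0 → ∃ f : M →ₗ[Λ] X, f x ≠ 0

theorem sep_of_mem_addOf {Y X : Mdl Λ} (h : Y ∈ addOf Λ X) : Sep Y X := by
  obtain ⟨n, i, p, hip⟩ := h
  intro x hx
  have hi : i x ≠ 0 := by
    intro h0
    apply hx
    have := LinearMap.congr_fun hip x
    simpa [h0] using this.symm
  obtain ⟨j, hj⟩ := Function.ne_iff.mp hi
  exact ⟨(LinearMap.proj j).comp i, hj⟩

theorem Sep.of_injective {M N X : Mdl Λ} (h : Sep N X) (f : M →ₗ[Λ] N) (hf : Injective f) :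
    Sep M X := by
  intro x hx
  obtain ⟨g, hg⟩ := h (f x) (by simpa using (map_ne_zero_iff f hf).mpr hx)
  exact ⟨g.comp f, hg⟩

theorem Sep.trans {M N X : Mdl Λ} (h : Sep M N) (h' : Sep N X) : Sep M X := by
  intro x hx
  obtain ⟨f, hf⟩ := h x hx
  obtain ⟨g, hg⟩ := h' _ hf
  exact ⟨g.comp f, hg⟩

theorem sep_self (X : Mdl Λ) : Sep X X := fun _ hx => ⟨LinearMap.id, hx⟩

theorem pi_mem_addOf (X : Mdl Λ) (n : ℕ) : ModuleCat.of Λ (Fin n → X) ∈ addOf Λ X :=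
  ⟨n, LinearMap.id, LinearMap.id, rfl⟩

theorem self_mem_addOf (X : Mdl Λ) : X ∈ addOf Λ X :=
  ⟨1, LinearMap.pi fun _ => LinearMap.id, LinearMap.proj 0, rfl⟩

/-- By the descending chain condition, finitely many of the maps that separate the points of `M`
already do so. -/
theorem exists_injective_of_sep {M X : Mdl Λ} [IsArtinian Λ M] (h : Sep M X) :
    ∃ (n : ℕ) (f : M →ₗ[Λ] (Fin n → X)), Injective f := by
  obtain ⟨t, ht⟩ := Finset.exists_inf_le (fun f : M →ₗ[Λ] X => LinearMap.ker f)
  let e := t.equivFin.symm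
  refine ⟨t.card, LinearMap.pi fun j => (e j).1, ?_⟩
  rw [← LinearMap.ker_eq_bot, eq_bot_iff]
  intro x hx
  by_contra hx0
  obtain ⟨f, hf⟩ := h x hx0
  apply hf
  refine ht f ?_
  rw [Submodule.mem_finsetInf]
  intro g hg
  have := congr_fun (LinearMap.mem_ker.mp hx) (e.symm ⟨g, hg⟩)
  simpa using this

theorem finite_pi (X : Mdl Λ) [Module.Finite Λ X] (n : ℕ) :
    Module.Finite Λ (ModuleCat.of Λ (Fin n → X)) :=
  inferInstanceAs (Module.Finite Λ (Fin n → X))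

theorem finite_of_summand {M N : Mdl Λ} (h : IsSummand Λ M N) (hN : Module.Finite Λ N) :
    Module.Finite Λ M := by
  obtain ⟨i, p, hip⟩ := h
  exact Module.Finite.of_surjective p fun x => ⟨i x, LinearMap.congr_fun hip x⟩

theorem summand_trans {A B C : Mdl Λ} (h : IsSummand Λ A B) (h' : IsSummand Λ B C) :
    IsSummand Λ A C := by
  obtain ⟨i, p, hip⟩ := h
  obtain ⟨j, q, hjq⟩ := h'
  refine ⟨j.comp i, p.comp q, ?_⟩
  ext x
  have h1 : q (j (i x)) = i x := LinearMap.congr_fun hjq (i x)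
  have h2 : p (i x) = x := LinearMap.congr_fun hip x
  simp [h1, h2]

theorem summand_of_iso {A B : Mdl Λ} (e : A ≃ₗ[Λ] B) : IsSummand Λ A B :=
  ⟨e, e.symm, by ext; simp⟩

theorem summand_left (A B : Mdl Λ) : IsSummand Λ A (dsum Λ A B) :=
  ⟨LinearMap.inl Λ A B, LinearMap.fst Λ A B, rfl⟩

theorem summand_right (A B : Mdl Λ) : IsSummand Λ B (dsum Λ A B) :=
  ⟨LinearMap.inr Λ A B, LinearMap.snd Λ A B, rfl⟩

theorem addOf_of_summand {A B X : Mdl Λ} (h : IsSummand Λ A B) (hB : B ∈ addOf Λ X) :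
    A ∈ addOf Λ X := by
  obtain ⟨n, hn⟩ := hB
  exact ⟨n, summand_trans h hn⟩

theorem addOf_dsum {A B X : Mdl Λ} (hA : A ∈ addOf Λ X) (hB : B ∈ addOf Λ X) :
    dsum Λ A B ∈ addOf Λ X := by
  obtain ⟨n, i, p, h⟩ := hA
  obtain ⟨n', i', p', h'⟩ := hB
  let e : ((Fin n → X) × (Fin n' → X)) ≃ₗ[Λ] (Fin (n + n') → X) :=
    (LinearEquiv.sumArrowLequivProdArrow (Fin n) (Fin n') Λ X).symm.trans
      (LinearEquiv.funCongrLeft Λ X finSumFinEquiv.symm)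
  refine ⟨n + n', e.toLinearMap.comp (i.prodMap i'), (p.prodMap p').comp e.symm.toLinearMap, ?_⟩
  refine LinearMap.ext fun x => ?_
  have h1 : p (i x.1) = x.1 := LinearMap.congr_fun h x.1
  have h2 : p' (i' x.2) = x.2 := LinearMap.congr_fun h' x.2
  change (p.prodMap p') (e.symm (e (i x.1, i' x.2))) = x
  rw [e.symm_apply_apply]
  exact Prod.ext h1 h2

theorem isSummand_dsum {A B : Mdl Λ} (h : IsSummand Λ A B) :
    ∃ D : Mdl Λ, IsoM Λ B (dsum Λ A D) := by
  obtain ⟨i, p, hip⟩ := h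
  have hpi : ∀ a, p (i a) = a := LinearMap.congr_fun hip
  refine ⟨ModuleCat.of Λ (LinearMap.ker p), ⟨LinearEquiv.ofLinearMap
    (LinearMap.prod p ((LinearMap.id - i.comp p).codRestrict _ (by intro b; simp [hpi])))
    (LinearMap.coprod i (LinearMap.ker p).subtype) ?_ ?_⟩⟩
  · refine LinearMap.ext fun x => ?_
    obtain ⟨a, d, hd⟩ := x
    have hd' : p d = 0 := hd
    refine Prod.ext ?_ (Subtype.ext ?_)
    · change p (i a + d) = a
      simp [hpi, hd']
    · change i a + d - i (p (i a + d)) = d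
      simp [hpi, hd']
  · refine LinearMap.ext fun b => ?_
    change i (p b) + (b - i (p b)) = b
    simp

theorem IsoM.symm {A B : Mdl Λ} (h : IsoM Λ A B) : IsoM Λ B A := h.map LinearEquiv.symm

theorem IsoM.trans {A B D : Mdl Λ} (h : IsoM Λ A B) (h' : IsoM Λ B D) : IsoM Λ A D :=
  ⟨h.some.trans h'.some⟩

variable [IsArtinianRing Λ]

theorem mem_cogen_iff {M X : Mdl Λ} : M ∈ Cogen Λ X ↔ Module.Finite Λ M ∧ Sep M X := by
  constructor
  · rintro ⟨hM, Y, hY, f, hf⟩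
    exact ⟨hM, (sep_of_mem_addOf hY).of_injective f hf⟩
  · rintro ⟨hM, h⟩
    obtain ⟨n, f, hf⟩ := exists_injective_of_sep h
    exact ⟨hM, _, pi_mem_addOf X n, f, hf⟩

theorem finite_of_injective {M N : Mdl Λ} (hN : Module.Finite Λ N) (f : M →ₗ[Λ] N)
    (hf : Injective f) : Module.Finite Λ M :=
  Module.Finite.of_injective f hf

theorem cogen_of_injective {M N X : Mdl Λ} (h : N ∈ Cogen Λ X) (f : M →ₗ[Λ] N)
    (hf : Injective f) : M ∈ Cogen Λ X := by
  rw [mem_cogen_iff] at *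
  exact ⟨finite_of_injective h.1 f hf, h.2.of_injective f hf⟩

theorem cogen_trans {M N X : Mdl Λ} (h : M ∈ Cogen Λ N) (h' : N ∈ Cogen Λ X) :
    M ∈ Cogen Λ X := by
  rw [mem_cogen_iff] at *
  exact ⟨h.1, h.2.trans h'.2⟩

theorem cogen_dsum {A B X : Mdl Λ} (hA : A ∈ Cogen Λ X) (hB : B ∈ Cogen Λ X) :
    dsum Λ A B ∈ Cogen Λ X := by
  rw [mem_cogen_iff] at *
  have := hA.1
  have := hB.1
  refine ⟨inferInstanceAs (Module.Finite Λ (A × B)), ?_⟩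
  intro x hx
  by_cases h1 : x.1 = 0
  · have h2 : x.2 ≠ 0 := fun h2 => hx (Prod.ext h1 h2)
    obtain ⟨f, hf⟩ := hB.2 _ h2
    exact ⟨f.comp (LinearMap.snd Λ A B), hf⟩
  · obtain ⟨f, hf⟩ := hA.2 _ h1
    exact ⟨f.comp (LinearMap.fst Λ A B), hf⟩

theorem cogen_self {X : Mdl Λ} (h : Module.Finite Λ X) : X ∈ Cogen Λ X :=
  mem_cogen_iff.mpr ⟨h, sep_self X⟩

theorem cogen_of_summand {M X : Mdl Λ} (h : IsSummand Λ M X) (hX : Module.Finite Λ X) :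
    M ∈ Cogen Λ X := by
  have hM := finite_of_summand h hX
  obtain ⟨i, p, hip⟩ := h
  exact cogen_of_injective (cogen_self hX) i
    (LeftInverse.injective (g := p) (LinearMap.congr_fun hip))

end Cogeneration

/-! ### Vanishing of `Ext¹` -/

section Ext

variable {Λ : Type} [Ring Λ]

/-- If `Ext¹(B, U) = 0` and `g : E → B` is surjective, then every map `ker g → U` extends to `E`:
the pushout of `0 → ker g → E → B → 0` along the map splits. -/
theorem Ext1Zero.extend {B U : Mdl Λ} (h : Ext1Zero Λ B U) {E : Mdl Λ} (g : E →ₗ[Λ] B)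
    (hg : Surjective g) (φ : LinearMap.ker g →ₗ[Λ] U) :
    ∃ ψ : E →ₗ[Λ] U, ∀ x : LinearMap.ker g, ψ x = φ x := by
  let S : Submodule Λ (U × E) := LinearMap.range (φ.prod (-(LinearMap.ker g).subtype))
  have hS : ∀ u e, (u, e) ∈ S → ∃ x : LinearMap.ker g, φ x = u ∧ -(x : E) = e := by
    rintro u e ⟨x, hx⟩
    exact ⟨x, congrArg Prod.fst hx, congrArg Prod.snd hx⟩
  have hle : S ≤ LinearMap.ker (g.comp (LinearMap.snd Λ U E)) := by
    rintro ⟨u, e⟩ hx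
    obtain ⟨x, -, rfl⟩ := hS u e hx
    have := x.2
    simp
  let f' : U →ₗ[Λ] ((U × E) ⧸ S) := S.mkQ.comp (LinearMap.inl Λ U E)
  let g' : ((U × E) ⧸ S) →ₗ[Λ] B := S.liftQ _ hle
  have hses : IsSESeq Λ (A := U) (E := ModuleCat.of Λ ((U × E) ⧸ S)) (B := B) f' g' := by
    refine ⟨?_, ?_, ?_⟩
    · rw [← LinearMap.ker_eq_bot, eq_bot_iff]
      intro u hu
      have : ((u, 0) : U × E) ∈ S := by simpa [f'] using hu
      obtain ⟨x, hx, hx'⟩ := hS _ _ this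
      have hx0 : x = 0 := by
        apply Subtype.ext
        simpa using hx'
      simp [← hx, hx0]
    · intro b
      obtain ⟨e, rfl⟩ := hg b
      exact ⟨S.mkQ (0, e), by simp [g']⟩
    · apply le_antisymm
      · rintro _ ⟨u, rfl⟩
        simp [f', g']
      · intro y hy
        obtain ⟨⟨u, e⟩, rfl⟩ := S.mkQ_surjective y
        have he : g e = 0 := by simpa [g'] using hy
        refine ⟨u + φ ⟨e, he⟩, ?_⟩
        refine (Submodule.Quotient.eq S).mpr ⟨⟨e, he⟩, ?_⟩
        simp
  obtain ⟨s, hs⟩ := h _ _ _ hses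
  -- The section `s` of `g'` yields the retraction `y ↦ y - s (g' y)` onto the image of `f'`.
  have hfi := hses.1
  let ι := LinearEquiv.ofInjective f' hfi
  let r₀ : ((U × E) ⧸ S) →ₗ[Λ] ((U × E) ⧸ S) := LinearMap.id - s.comp g'
  have hr₀ : ∀ y, r₀ y ∈ LinearMap.range f' := by
    intro y
    rw [hses.2.2, LinearMap.mem_ker]
    have := LinearMap.congr_fun hs (g' y)
    simp only [LinearMap.comp_apply, LinearMap.id_apply] at this
    simp [r₀, this]
  refine ⟨ι.symm.toLinearMap.comp ((r₀.codRestrict _ hr₀).comp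
    (S.mkQ.comp (LinearMap.inr Λ U E))), fun x => ?_⟩
  have hx : g x = 0 := x.2
  have key : S.mkQ ((0, (x : E)) : U × E) = f' (φ x) := by
    refine ((Submodule.Quotient.eq S).mpr ⟨-x, ?_⟩)
    simp
  simp only [LinearMap.comp_apply, LinearEquiv.coe_coe, LinearMap.inr_apply]
  rw [LinearEquiv.symm_apply_eq]
  apply Subtype.ext
  have hg'0 : g' (f' (φ x)) = 0 := by
    have : f' (φ x) ∈ LinearMap.ker g' := hses.2.2 ▸ ⟨_, rfl⟩
    exact this
  simp [ι, key, r₀, hg'0]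

/-- A retraction of the inclusion `U → E` splits the sequence. -/
theorem section_of_retraction {U E B : Mdl Λ} {f : U →ₗ[Λ] E} {g : E →ₗ[Λ] B}
    (h : IsSESeq Λ f g) (r : E →ₗ[Λ] U) (hr : ∀ u, r (f u) = u) :
    ∃ s : B →ₗ[Λ] E, g.comp s = LinearMap.id := by
  obtain ⟨hf, hg, hfg⟩ := h
  let t : E →ₗ[Λ] E := LinearMap.id - f.comp r
  have ht : LinearMap.ker g ≤ LinearMap.ker t := by
    rw [← hfg]
    rintro _ ⟨u, rfl⟩
    simp [t, hr]
  let e := g.quotKerEquivOfSurjective hg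
  refine ⟨((LinearMap.ker g).liftQ t ht).comp e.symm.toLinearMap, ?_⟩
  ext b
  obtain ⟨x, rfl⟩ := hg b
  have he : e.symm (g x) = (LinearMap.ker g).mkQ x := by
    rw [LinearEquiv.symm_apply_eq]
    rfl
  have hgf : g (f (r x)) = 0 := by
    have : f (r x) ∈ LinearMap.ker g := hfg ▸ ⟨_, rfl⟩
    exact this
  simp [he, t, hgf]

/-- `Ext1Zero.extend` for an exact sequence with an arbitrary kernel map. -/
theorem Ext1Zero.extend_ses {B U A E : Mdl Λ} (h : Ext1Zero Λ B U) {f : A →ₗ[Λ] E}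
    {g : E →ₗ[Λ] B} (hs : IsSESeq Λ f g) (φ : A →ₗ[Λ] U) :
    ∃ ψ : E →ₗ[Λ] U, ∀ a, ψ (f a) = φ a := by
  obtain ⟨hf, hg, hfg⟩ := hs
  let e := LinearEquiv.ofInjective f hf
  have hle : LinearMap.ker g ≤ LinearMap.range f := hfg.ge
  obtain ⟨ψ, hψ⟩ := h.extend g hg (φ.comp (e.symm.toLinearMap.comp (Submodule.inclusion hle)))
  refine ⟨ψ, fun a => ?_⟩
  have ha : f a ∈ LinearMap.ker g := hfg ▸ ⟨a, rfl⟩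
  rw [hψ ⟨f a, ha⟩]
  have : e.symm (Submodule.inclusion hle ⟨f a, ha⟩) = a := by
    rw [LinearEquiv.symm_apply_eq]
    rfl
  simp [this]

theorem Ext1Zero.of_extend {B U : Mdl Λ}
    (h : ∀ (E : Mdl Λ) (f : U →ₗ[Λ] E) (g : E →ₗ[Λ] B), IsSESeq Λ f g →
      ∃ r : E →ₗ[Λ] U, ∀ u, r (f u) = u) : Ext1Zero Λ B U := by
  intro E f g hs
  obtain ⟨r, hr⟩ := h E f g hs
  exact section_of_retraction hs r hr

theorem Ext1Zero.of_summand {B U P : Mdl Λ} (h : Ext1Zero Λ B U) (hP : IsSummand Λ P U) :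
    Ext1Zero Λ B P := by
  obtain ⟨i, p, hip⟩ := hP
  refine Ext1Zero.of_extend fun E f g hs => ?_
  obtain ⟨ψ, hψ⟩ := h.extend_ses hs i
  exact ⟨p.comp ψ, fun u => by simpa [hψ] using LinearMap.congr_fun hip u⟩

theorem Ext1Zero.dsum {B P V : Mdl Λ} (hP : Ext1Zero Λ B P) (hV : Ext1Zero Λ B V) :
    Ext1Zero Λ B (dsum Λ P V) := by
  refine Ext1Zero.of_extend fun E f g hs => ?_
  obtain ⟨ψ, hψ⟩ := hP.extend_ses hs (LinearMap.fst Λ P V)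
  obtain ⟨χ, hχ⟩ := hV.extend_ses hs (LinearMap.snd Λ P V)
  exact ⟨ψ.prod χ, fun u => Prod.ext (hψ u) (hχ u)⟩

/-- `Ext¹(-, U)` vanishes on an extension of two modules on which it vanishes.  The extension is
given by a map `q : N → D` with kernel `L`. -/
theorem Ext1Zero.of_ker {N D U : Mdl Λ} (q : N →ₗ[Λ] D) (hq : Surjective q)
    (hL : Ext1Zero Λ (ModuleCat.of Λ (LinearMap.ker q)) U) (hD : Ext1Zero Λ D U) :
    Ext1Zero Λ N U := by
  refine Ext1Zero.of_extend fun E f g hs => ?_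
  obtain ⟨hf, hg, hfg⟩ := hs
  -- Split the pullback `E' = ker (q ∘ g)` of the sequence to `ker q`, then extend to `E`.
  let E' : Mdl Λ := ModuleCat.of Λ (LinearMap.ker (q.comp g))
  have hgf : ∀ u, g (f u) = 0 := fun u => by
    have : f u ∈ LinearMap.ker g := hfg ▸ ⟨u, rfl⟩
    exact this
  let f' : U →ₗ[Λ] E' := f.codRestrict _ (by intro u; simp [hgf])
  let g' : E' →ₗ[Λ] LinearMap.ker q :=
    (g.comp (LinearMap.ker (q.comp g)).subtype).codRestrict _ (by
      rintro ⟨x, hx⟩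
      simpa using hx)
  have hs' : IsSESeq Λ (A := U) (E := E') (B := ModuleCat.of Λ (LinearMap.ker q)) f' g' := by
    refine ⟨?_, ?_, ?_⟩
    · intro a b hab
      exact hf (congrArg Subtype.val hab)
    · rintro ⟨y, hy⟩
      obtain ⟨x, rfl⟩ := hg y
      exact ⟨⟨x, hy⟩, rfl⟩
    · apply le_antisymm
      · rintro _ ⟨u, rfl⟩
        exact Subtype.ext (hgf u)
      · rintro ⟨x, hx⟩ hx'
        have hx0 : g x = 0 := congrArg Subtype.val hx'
        have : x ∈ LinearMap.range f := hfg ▸ hx0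
        obtain ⟨u, rfl⟩ := this
        exact ⟨u, rfl⟩
  obtain ⟨r, hr⟩ := hL.extend_ses hs' LinearMap.id
  obtain ⟨ψ, hψ⟩ := hD.extend (q.comp g) (hq.comp hg) r
  exact ⟨ψ, fun u => (hψ (f' u)).trans (hr u)⟩

end Ext

end Paper

namespace Paper

/-! ### Decompositions into indecomposable modules -/

section KrullSchmidt

variable {Λ : Type} [Ring Λ]

theorem isZeroM_of_iso {A B : Mdl Λ} (h : IsoM Λ A B) (hA : IsZeroM Λ A) : IsZeroM Λ B := by
  obtain ⟨e⟩ := h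
  have : Subsingleton A := hA
  exact e.symm.toEquiv.subsingleton

/-- Membership in `add I` follows from membership of `I` for a property closed under finite direct
sums and summands. -/
theorem addOf_induction (p : Mdl Λ → Prop) (h0 : ∀ Z, IsZeroM Λ Z → p Z)
    (hadd : ∀ A B, p A → p B → p (dsum Λ A B)) (hsum : ∀ A B, IsSummand Λ A B → p B → p A)
    {I M : Mdl Λ} (hI : p I) (hM : M ∈ addOf Λ I) : p M := by
  obtain ⟨n, hn⟩ := hM
  refine hsum _ _ hn ?_
  clear hn
  induction n with
  | zero => exact h0 _ (inferInstanceAs (Subsingleton (Fin 0 → I)))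
  | succ n ih =>
    refine hsum _ _ (summand_of_iso ?_) (hadd _ _ hI ih)
    exact (Fin.consLinearEquiv Λ (fun _ : Fin (n + 1) => I)).symm

theorem basic_of_summand {A B : Mdl Λ} (h : IsSummand Λ A B) (hB : IsBasic Λ B) :
    IsBasic Λ A := fun N hN hNA => hB N hN (summand_trans hNA h)

theorem summand_of_unit {A B : Mdl Λ} (i : A →ₗ[Λ] B) (p : B →ₗ[Λ] A)
    (h : IsUnit (p.comp i : Module.End Λ A)) : IsSummand Λ A B := by
  obtain ⟨u, hu⟩ := h
  refine ⟨i, (↑u⁻¹ : Module.End Λ A).comp p, ?_⟩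
  rw [LinearMap.comp_assoc, ← hu]
  exact u.inv_mul

theorem iso_of_indec_summand {Y V : Mdl Λ} (hY : Indec Λ Y) (hV : ¬ IsZeroM Λ V)
    (h : IsSummand Λ V Y) : IsoM Λ Y V := by
  obtain ⟨D, ⟨e⟩⟩ := isSummand_dsum h
  rcases hY.2 V D ⟨e⟩ with h0 | h0
  · exact absurd h0 hV
  · have : Subsingleton D := h0
    have : Unique D := uniqueOfSubsingleton 0
    exact ⟨e.trans LinearEquiv.prodUnique⟩

theorem exists_decomp {M : Mdl Λ} (h0 : ¬ IsZeroM Λ M) (h : ¬ Indec Λ M) :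
    ∃ A B : Mdl Λ, IsoM Λ M (dsum Λ A B) ∧ ¬ IsZeroM Λ A ∧ ¬ IsZeroM Λ B := by
  by_contra! hcon
  refine h ⟨h0, fun A B e => ?_⟩
  by_cases hA : IsZeroM Λ A
  · exact Or.inl hA
  · exact Or.inr (hcon A B e hA)

variable [IsArtinianRing Λ]

/-- Fitting's lemma for an indecomposable module of finite length. -/
theorem Indec.unit_or_nilpotent {Y : Mdl Λ} (hY : Indec Λ Y) (hfin : Module.Finite Λ Y)
    (f : Module.End Λ Y) : IsUnit f ∨ IsNilpotent f := by
  obtain ⟨n, hn, hn1⟩ := (f.eventually_isCompl_ker_pow_range_pow.and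
    (Filter.eventually_ge_atTop 1)).exists
  have e := Submodule.prodEquivOfIsCompl _ _ hn
  rcases hY.2 (ModuleCat.of Λ (LinearMap.ker (f ^ n))) (ModuleCat.of Λ (LinearMap.range (f ^ n)))
    ⟨e.symm⟩ with h | h
  · left
    have hb : LinearMap.ker (f ^ n) = ⊥ := (Submodule.subsingleton_iff_eq_bot).mp h
    have hr : LinearMap.range (f ^ n) = ⊤ := by
      have := hn.sup_eq_top
      rwa [hb, bot_sup_eq] at this
    have hu : IsUnit (f ^ n) := (Module.End.isUnit_iff _).mpr
      ⟨LinearMap.ker_eq_bot.mp hb, LinearMap.range_eq_top.mp hr⟩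
    exact (isUnit_pow_iff (by omega)).mp hu
  · right
    have hb : LinearMap.range (f ^ n) = ⊥ := (Submodule.subsingleton_iff_eq_bot).mp h
    exact ⟨n, LinearMap.range_eq_bot.mp hb⟩

theorem Indec.nilpotent_mul {Y : Mdl Λ} (hY : Indec Λ Y) (hfin : Module.Finite Λ Y)
    {f : Module.End Λ Y} (hf : ¬ IsUnit f) (g : Module.End Λ Y) : IsNilpotent (g * f) := by
  refine (hY.unit_or_nilpotent hfin (g * f)).resolve_left fun hu => hf ?_
  have hinj : Injective f := by
    have := ((Module.End.isUnit_iff _).mp hu).1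
    exact Injective.of_comp (f := g) this
  exact (Module.End.isUnit_iff _).mpr ⟨hinj, IsArtinian.surjective_of_injective_endomorphism f hinj⟩

/-- Non-automorphisms of an indecomposable module lie in the radical of its endomorphism ring. -/
theorem Indec.mem_jacobson {Y : Mdl Λ} (hY : Indec Λ Y) (hfin : Module.Finite Λ Y)
    {f : Module.End Λ Y} (hf : ¬ IsUnit f) : f ∈ Ring.jacobson (Module.End Λ Y) := by
  rw [← Ideal.jacobson_bot, Ideal.mem_jacobson_iff]
  intro g
  obtain ⟨u, hu⟩ := (hY.nilpotent_mul hfin hf g).isUnit_one_add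
  refine ⟨↑u⁻¹, ?_⟩
  have h : (↑u⁻¹ : Module.End Λ Y) * (1 + g * f) = 1 := by rw [← hu]; exact u.inv_mul
  rw [Ideal.mem_bot, sub_eq_zero, ← h]
  noncomm_ring

/-- The endomorphism ring of an indecomposable module is local: if a finite sum of endomorphisms is
the identity, then one of them is an automorphism. -/
theorem Indec.exists_unit {Y : Mdl Λ} (hY : Indec Λ Y) (hfin : Module.Finite Λ Y)
    {ι : Type} (s : Finset ι) (a : ι → Module.End Λ Y) (h : ∑ i ∈ s, a i = 1) :
    ∃ i, IsUnit (a i) := by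
  by_contra! hcon
  have h1 : (1 : Module.End Λ Y) ∈ Ring.jacobson (Module.End Λ Y) := by
    rw [← h]
    exact Submodule.sum_mem _ fun i _ => hY.mem_jacobson hfin (hcon i)
  rw [← Ideal.jacobson_bot, Ideal.mem_jacobson_iff] at h1
  obtain ⟨z, hz⟩ := h1 (-1)
  rw [Ideal.mem_bot] at hz
  have h01 : (1 : Module.End Λ Y) = 0 := by
    have : z * -1 * 1 + z - 1 = (-1 : Module.End Λ Y) := by noncomm_ring
    rw [this] at hz
    simpa using hz
  apply hY.1
  refine ⟨fun x y => ?_⟩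
  have hx : x = 0 := LinearMap.congr_fun h01 x
  have hy : y = 0 := LinearMap.congr_fun h01 y
  rw [hx, hy]

theorem Indec.summand_of_dsum {Y A B : Mdl Λ} (hY : Indec Λ Y) (hfin : Module.Finite Λ Y)
    (h : IsSummand Λ Y (dsum Λ A B)) : IsSummand Λ Y A ∨ IsSummand Λ Y B := by
  obtain ⟨i, p, hip⟩ := h
  let iA : Y →ₗ[Λ] A := (LinearMap.fst Λ A B).comp i
  let iB : Y →ₗ[Λ] B := (LinearMap.snd Λ A B).comp i
  let pA : A →ₗ[Λ] Y := p.comp (LinearMap.inl Λ A B)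
  let pB : B →ₗ[Λ] Y := p.comp (LinearMap.inr Λ A B)
  let a : Bool → Module.End Λ Y := fun b => bif b then pA.comp iA else pB.comp iB
  have hsum : ∑ b ∈ Finset.univ, a b = 1 := by
    refine LinearMap.ext fun x => ?_
    have hx : p (i x) = x := LinearMap.congr_fun hip x
    rw [Fintype.sum_bool]
    have hdec : ∀ z : dsum Λ A B,
        LinearMap.inl Λ A B ((LinearMap.fst Λ A B) z) +
          LinearMap.inr Λ A B ((LinearMap.snd Λ A B) z) = z :=
      fun z => Prod.ext (add_zero _) (zero_add _)
    refine Eq.trans ?_ hx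
    refine Eq.trans (map_add p _ _).symm ?_
    exact congrArg p (hdec (i x))
  obtain ⟨b, hb⟩ := hY.exists_unit hfin _ a hsum
  cases b
  · exact Or.inr (summand_of_unit iB pB hb)
  · exact Or.inl (summand_of_unit iA pA hb)

theorem Indec.summand_of_pi {Y A : Mdl Λ} (hY : Indec Λ Y) (hfin : Module.Finite Λ Y) {n : ℕ}
    (h : IsSummand Λ Y (ModuleCat.of Λ (Fin n → A))) : IsSummand Λ Y A := by
  obtain ⟨i, p, hip⟩ := h
  let a : Fin n → Module.End Λ Y := fun j =>
    (p.comp (LinearMap.single Λ (fun _ : Fin n => A) j)).comp ((LinearMap.proj j).comp i)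
  have hsum : ∑ j ∈ Finset.univ, a j = 1 := by
    refine LinearMap.ext fun x => ?_
    have hx : p (i x) = x := LinearMap.congr_fun hip x
    rw [LinearMap.sum_apply]
    refine Eq.trans ?_ hx
    refine Eq.trans (map_sum p (fun j => Pi.single j (i x j)) _).symm ?_
    exact congrArg p (Finset.univ_sum_single (i x))
  obtain ⟨j, hj⟩ := hY.exists_unit hfin _ a hsum
  exact summand_of_unit _ _ hj

theorem length_lt_left {A B : Mdl Λ} (hA : Module.Finite Λ A) (hB : ¬ IsZeroM Λ B) :
    Module.length Λ A < Module.length Λ (dsum Λ A B) := by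
  have hB' : Nontrivial B := not_subsingleton_iff_nontrivial.mp hB
  have h1 : Module.length Λ (dsum Λ A B) = Module.length Λ A + Module.length Λ B :=
    Module.length_prod Λ A B
  have h2 : 0 < Module.length Λ B := Module.length_pos
  rw [h1]
  calc Module.length Λ A = Module.length Λ A + 0 := (add_zero _).symm
    _ < _ := (ENat.add_lt_add_iff_left Module.length_ne_top).mpr h2

theorem length_lt_right {A B : Mdl Λ} (hB : Module.Finite Λ B) (hA : ¬ IsZeroM Λ A) :
    Module.length Λ B < Module.length Λ (dsum Λ A B) :=
  lt_of_lt_of_eq (length_lt_left hB hA) (LinearEquiv.prodComm Λ B A).length_eq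

/-- A property that is closed under finite direct sums and holds for the indecomposable summands of
`M` holds for `M`. -/
theorem indec_induction (p : Mdl Λ → Prop) (hiso : ∀ A B, IsoM Λ A B → p A → p B)
    (h0 : ∀ Z, IsZeroM Λ Z → p Z) (hadd : ∀ A B, p A → p B → p (dsum Λ A B))
    (M : Mdl Λ) (hM : Module.Finite Λ M) (hind : ∀ Y, Indec Λ Y → IsSummand Λ Y M → p Y) :
    p M := by
  induction hl : Module.length Λ M using WellFoundedLT.induction generalizing M with
  | ind l ih =>
  subst hl
  by_cases hz : IsZeroM Λ M
  · exact h0 M hz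
  by_cases hi : Indec Λ M
  · exact hind M hi (summand_of_iso (LinearEquiv.refl Λ M))
  obtain ⟨A, B, ⟨e⟩, hA, hB⟩ := exists_decomp hz hi
  have sA : IsSummand Λ A M := summand_trans (summand_left A B) (summand_of_iso e.symm)
  have sB : IsSummand Λ B M := summand_trans (summand_right A B) (summand_of_iso e.symm)
  have fA := finite_of_summand sA hM
  have fB := finite_of_summand sB hM
  have lA : Module.length Λ A < Module.length Λ M := by
    rw [e.length_eq]
    exact length_lt_left fA hB
  have lB : Module.length Λ B < Module.length Λ M := by
    rw [e.length_eq]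
    exact length_lt_right fB hA
  exact hiso _ _ ⟨e.symm⟩ (hadd A B
    (ih _ lA A fA (fun Y hY hYA => hind Y hY (summand_trans hYA sA)) rfl)
    (ih _ lB B fB (fun Y hY hYB => hind Y hY (summand_trans hYB sB)) rfl))

/-- For a property closed under finite direct sums, a maximal summand `M₁` of `M` with the property
has a complement `M₂` none of whose indecomposable summands has it. -/
theorem exists_split_off (p : Mdl Λ → Prop)
    (h0 : ∀ Z, IsZeroM Λ Z → p Z) (hadd : ∀ A B, p A → p B → p (dsum Λ A B))
    (M : Mdl Λ) (hM : Module.Finite Λ M) :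
    ∃ M₁ M₂ : Mdl Λ, IsoM Λ M (dsum Λ M₁ M₂) ∧ p M₁ ∧
      ∀ Y, Indec Λ Y → IsSummand Λ Y M₂ → ¬ p Y := by
  induction hl : Module.length Λ M using WellFoundedLT.induction generalizing M with
  | ind l ih =>
  subst hl
  by_cases hcon : ∃ Y, Indec Λ Y ∧ IsSummand Λ Y M ∧ p Y
  · obtain ⟨Y, hY, hYM, hp⟩ := hcon
    obtain ⟨N, ⟨e⟩⟩ := isSummand_dsum hYM
    have sN : IsSummand Λ N M := summand_trans (summand_right Y N) (summand_of_iso e.symm)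
    have fN := finite_of_summand sN hM
    have lN : Module.length Λ N < Module.length Λ M := by
      rw [e.length_eq]
      exact length_lt_right fN hY.1
    obtain ⟨N₁, N₂, ⟨e'⟩, hp', hN⟩ := ih _ lN N fN rfl
    exact ⟨dsum Λ Y N₁, N₂,
      ⟨(e.trans ((LinearEquiv.refl Λ Y).prodCongr e')).trans
        (LinearEquiv.prodAssoc Λ Y N₁ N₂).symm⟩, hadd _ _ hp hp', hN⟩
  · push Not at hcon
    exact ⟨ModuleCat.of Λ PUnit, M, ⟨LinearEquiv.uniqueProd.symm⟩,
      h0 _ (inferInstanceAs (Subsingleton PUnit)), hcon⟩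

theorem iso_of_mem_addOf {Y V : Mdl Λ} (hY : Indec Λ Y) (hYf : Module.Finite Λ Y)
    (hV : Indec Λ V) (h : V ∈ addOf Λ Y) : IsoM Λ Y V := by
  obtain ⟨n, hn⟩ := h
  have hVf : Module.Finite Λ V := finite_of_summand hn (finite_pi Y n)
  exact iso_of_indec_summand hY hV.1 (hV.summand_of_pi hVf hn)

/-- In a basic module `U ≅ W ⊕ Y` with `Y` indecomposable, deleting `Y` leaves exactly `W`. -/
theorem isDeleted_of_basic {U W Y : Mdl Λ} (hU : IsBasic Λ U) (hUf : Module.Finite Λ U)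
    (hY : Indec Λ Y) (e : IsoM Λ U (dsum Λ W Y)) : IsDeleted Λ U (addOf Λ Y) W := by
  have hYU : IsSummand Λ Y U :=
    summand_trans (summand_right W Y) (summand_of_iso e.symm.some)
  refine ⟨Y, e, fun V _ hV => addOf_of_summand hV (self_mem_addOf Y), fun V hV hVW hVY => ?_⟩
  obtain ⟨f⟩ := iso_of_mem_addOf hY (finite_of_summand hYU hUf) hV hVY
  obtain ⟨i, p, hip⟩ := summand_trans (summand_of_iso f) hVW
  refine hU Y hY.1 (summand_trans ?_ (summand_of_iso e.symm.some))
  refine ⟨i.prodMap LinearMap.id, p.prodMap LinearMap.id, ?_⟩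
  refine LinearMap.ext fun x => Prod.ext ?_ rfl
  exact LinearMap.congr_fun hip x.1

end KrullSchmidt

/-! ### Endomorphism rings over a finite-dimensional algebra -/

section FiniteDimensional

/-- Over a finite-dimensional algebra, `End Y` is finite-dimensional.  The `K`-module structure on
`Y` is obtained by restriction along `K → Λ`. -/
theorem isArtinianRing_end (K : Type) {Λ : Type} [Field K] [Ring Λ] [Algebra K Λ]
    [FiniteDimensional K Λ] (Y : Mdl Λ) (hY : Module.Finite Λ Y) :
    IsArtinianRing (Module.End Λ Y) := by
  let : Module K Y := Module.compHom Y (algebraMap K Λ)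
  have : IsScalarTower K Λ Y := ⟨fun k a y => by
    change (k • a) • y = algebraMap K Λ k • (a • y)
    rw [Algebra.smul_def, mul_smul]⟩
  have : SMulCommClass Λ K Y := ⟨fun a k y => by
    change a • (algebraMap K Λ k • y) = algebraMap K Λ k • (a • y)
    rw [← mul_smul, ← mul_smul, Algebra.commutes]⟩
  have : SMulCommClass K Λ Y := SMulCommClass.symm _ _ _
  have : Module.Finite K Y := Module.Finite.trans Λ Y
  let ρ : Module.End Λ Y →ₗ[K] Module.End K Y :=
    { toFun := fun f => f.restrictScalars K
      map_add' := fun _ _ => rfl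
      map_smul' := fun _ _ => rfl }
  have hρ : Injective ρ := fun f g h => LinearMap.ext fun y => LinearMap.congr_fun h y
  have : Module.Finite K (Module.End Λ Y) := Module.Finite.of_injective ρ hρ
  exact IsArtinianRing.of_finite K (Module.End Λ Y)

end FiniteDimensional

end Paper

namespace Paper

/-! ### Split injective objects of `Cogen U` -/

section SplitInjective

variable {Λ : Type} [Ring Λ] [IsArtinianRing Λ]

theorem splitInj_summand {U Y Z : Mdl Λ} (hZ : SplitInjIn Λ (Cogen Λ U) Z)
    (h : IsSummand Λ Y Z) : SplitInjIn Λ (Cogen Λ U) Y := by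
  have hZf : Module.Finite Λ Z := hZ.1.1
  refine ⟨cogen_trans (cogen_of_summand h hZf) hZ.1, fun M hM f hf => ?_⟩
  obtain ⟨i, p, hip⟩ := h
  have hpi : ∀ y, p (i y) = y := LinearMap.congr_fun hip
  -- Under `Z ≅ Y ⊕ ker p` the map `F` is `f ⊕ 1`, with `ker p` included in `Z`.
  let F : Z →ₗ[Λ] (M × Z) := (f.comp p).prod (LinearMap.id - i.comp p)
  have hF : Injective F := by
    rw [← LinearMap.ker_eq_bot, eq_bot_iff]
    intro z hz
    have h1 : f (p z) = 0 := congrArg Prod.fst (LinearMap.mem_ker.mp hz)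
    have h2 : z - i (p z) = 0 := congrArg Prod.snd (LinearMap.mem_ker.mp hz)
    have h3 : p z = 0 := hf (by rw [h1, map_zero])
    simpa [h3] using h2
  obtain ⟨r, hr⟩ := hZ.2 (dsum Λ M Z) (cogen_dsum hM hZ.1) F hF
  refine ⟨p.comp (r.comp (LinearMap.inl Λ M Z)), LinearMap.ext fun y => ?_⟩
  have hy : F (i y) = (f y, 0) := Prod.ext (by simp [F, hpi]) (by simp [F, hpi])
  have hy' : r (F (i y)) = i y := LinearMap.congr_fun hr (i y)
  rw [hy] at hy'
  change p (r (f y, 0)) = y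
  exact (congrArg p hy').trans (hpi y)

theorem splitInj_dsum {U A B : Mdl Λ} (hA : SplitInjIn Λ (Cogen Λ U) A)
    (hB : SplitInjIn Λ (Cogen Λ U) B) : SplitInjIn Λ (Cogen Λ U) (dsum Λ A B) := by
  refine ⟨cogen_dsum hA.1 hB.1, fun M hM f hf => ?_⟩
  let f₁ : A →ₗ[Λ] M := f.comp (LinearMap.inl Λ A B)
  let f₂ : B →ₗ[Λ] M := f.comp (LinearMap.inr Λ A B)
  have hf₁ : Injective f₁ := hf.comp LinearMap.inl_injective
  obtain ⟨r₁, hr₁⟩ := hA.2 M hM f₁ hf₁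
  have hr₁' : ∀ a, r₁ (f₁ a) = a := LinearMap.congr_fun hr₁
  -- `M = f₁ A ⊕ ker r₁`, and the projection of `B` to `ker r₁` is still a monomorphism.
  let π : M →ₗ[Λ] LinearMap.ker r₁ :=
    (LinearMap.id - f₁.comp r₁).codRestrict _ (by intro x; simp [hr₁'])
  have hπ : Injective (π.comp f₂) := by
    rw [← LinearMap.ker_eq_bot, eq_bot_iff]
    intro b hb
    have h1 : f₂ b - f₁ (r₁ (f₂ b)) = 0 := congrArg Subtype.val (LinearMap.mem_ker.mp hb)
    have h2 : f (-(r₁ (f₂ b)), b) = f 0 := by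
      have h3 : ((-(r₁ (f₂ b)), b) : A × B) = (0, b) - (r₁ (f₂ b), 0) := by
        ext <;> simp
      rw [map_zero]
      exact (congrArg f h3).trans ((map_sub f _ _).trans h1)
    exact congrArg Prod.snd (hf h2)
  have hker : ModuleCat.of Λ (LinearMap.ker r₁) ∈ Cogen Λ U :=
    cogen_of_injective hM (LinearMap.ker r₁).subtype Subtype.val_injective
  obtain ⟨r₂, hr₂⟩ := hB.2 _ hker (π.comp f₂) hπ
  let s : M →ₗ[Λ] B := r₂.comp π
  refine ⟨(r₁.comp (LinearMap.id - f₂.comp s)).prod s, LinearMap.ext fun z => ?_⟩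
  obtain ⟨a, b⟩ := z
  have hz : f (a, b) = f₁ a + f₂ b := by
    have h3 : ((a, b) : A × B) = (a, 0) + (0, b) := by ext <;> simp
    exact (congrArg f h3).trans (map_add f _ _)
  have hs₁ : s (f₁ a) = 0 := by
    have : π (f₁ a) = 0 := Subtype.ext (by simp [π, hr₁'])
    change r₂ (π (f₁ a)) = 0
    rw [this]
    exact map_zero r₂
  have hs₂ : s (f₂ b) = b := LinearMap.congr_fun hr₂ b
  have hs : s (f (a, b)) = b := by rw [hz, map_add, hs₁, hs₂, zero_add]
  refine Prod.ext ?_ hs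
  change r₁ (f (a, b) - f₂ (s (f (a, b)))) = a
  rw [hs, hz, add_sub_cancel_right, hr₁']

theorem splitInj_iso {U A B : Mdl Λ} (e : IsoM Λ A B) (hA : SplitInjIn Λ (Cogen Λ U) A) :
    SplitInjIn Λ (Cogen Λ U) B :=
  splitInj_summand hA (summand_of_iso e.symm.some)

theorem splitInj_zero {U Z : Mdl Λ} (hZ : IsZeroM Λ Z) : SplitInjIn Λ (Cogen Λ U) Z := by
  have : Subsingleton Z := hZ
  refine ⟨mem_cogen_iff.mpr ⟨inferInstance, fun x hx => absurd (Subsingleton.elim x 0) hx⟩,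
    fun M _ f _ => ⟨0, LinearMap.ext fun x => Subsingleton.elim _ _⟩⟩

/-- If `U ≅ W ⊕ Y` with `Y` indecomposable and `Y ∉ Cogen W`, then `Y` is split injective in
`Cogen U`.  Given a monomorphism `Y → M ↪ Uⁿ` without retraction, all its components `Y → Y` lie in
the nilpotent radical of `End Y`; a nonzero element of `Y` killed by all maps `Y → W` therefore
yields nonzero values of arbitrarily long products of radical elements. -/
theorem splitInj_of_not_cogen {U W Y : Mdl Λ} [IsArtinianRing (Module.End Λ Y)]
    (hU : Module.Finite Λ U) (hY : Indec Λ Y) (e : IsoM Λ U (dsum Λ W Y))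
    (hW : Y ∉ Cogen Λ W) : SplitInjIn Λ (Cogen Λ U) Y := by
  obtain ⟨e⟩ := e
  have hYU : IsSummand Λ Y U := summand_trans (summand_right W Y) (summand_of_iso e.symm)
  have hYf : Module.Finite Λ Y := finite_of_summand hYU hU
  refine ⟨cogen_of_summand hYU hU, fun M hM f hf => ?_⟩
  have hMf : Module.Finite Λ M := hM.1
  obtain ⟨n, g, hg⟩ := exists_injective_of_sep (mem_cogen_iff.mp hM).2
  let ρ : Fin n → (M →ₗ[Λ] Y) := fun j =>
    ((LinearMap.snd Λ W Y).comp e.toLinearMap).comp ((LinearMap.proj j).comp g)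
  let σ : Fin n → (M →ₗ[Λ] W) := fun j =>
    ((LinearMap.fst Λ W Y).comp e.toLinearMap).comp ((LinearMap.proj j).comp g)
  by_cases hunit : ∃ j, IsUnit ((ρ j).comp f : Module.End Λ Y)
  · obtain ⟨j, u, hu⟩ := hunit
    refine ⟨(↑u⁻¹ : Module.End Λ Y).comp (ρ j), ?_⟩
    rw [LinearMap.comp_assoc, ← hu]
    exact u.inv_mul
  exfalso
  push Not at hunit
  have hsep : ¬ Sep Y W := fun h => hW (mem_cogen_iff.mpr ⟨hYf, h⟩)
  unfold Sep at hsep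
  push Not at hsep
  obtain ⟨x, hx, hx0⟩ := hsep
  let J : Ideal (Module.End Λ Y) := Ring.jacobson (Module.End Λ Y)
  have hJ : ∀ k : ℕ, ∃ a ∈ J ^ k, a x ≠ 0 := by
    intro k
    induction k with
    | zero => exact ⟨1, by rw [Submodule.pow_zero, Ideal.one_eq_top]; trivial, hx⟩
    | succ k ih =>
      obtain ⟨a, ha, hax⟩ := ih
      have hne : g (f (a x)) ≠ 0 := by
        intro h0
        exact hax (hf ((hg (h0.trans (map_zero g).symm)).trans (map_zero f).symm))
      obtain ⟨j, hj⟩ := Function.ne_iff.mp hne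
      have hσ : σ j (f (a x)) = 0 := hx0 (((σ j).comp f).comp a)
      refine ⟨((ρ j).comp f : Module.End Λ Y) * a, ?_, ?_⟩
      · have hj : ((ρ j).comp f : Module.End Λ Y) ∈ J := hY.mem_jacobson hYf (hunit j)
        rcases Nat.eq_zero_or_pos k with rfl | hk
        · rw [Submodule.pow_one]
          exact J.mul_mem_right _ hj
        · rw [Submodule.pow_succ' _ hk.ne']
          exact Ideal.mul_mem_mul hj ha
      · intro h0
        apply hj
        have hρ : ρ j (f (a x)) = 0 := h0
        have : e (g (f (a x)) j) = 0 := Prod.ext hσ hρ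
        exact (e.map_eq_zero_iff).mp this
  obtain ⟨N, hN⟩ := (IsSemiprimaryRing.isNilpotent : IsNilpotent J)
  obtain ⟨a, ha, hax⟩ := hJ N
  rw [hN] at ha
  have ha0 : a = 0 := ha
  exact hax (by rw [ha0]; rfl)

theorem addOf_of_splitInj {U S : Mdl Λ} (h : SplitInjIn Λ (Cogen Λ U) S)
    (hU : Module.Finite Λ U) : S ∈ addOf Λ U := by
  have hS : Module.Finite Λ S := h.1.1
  obtain ⟨n, f, hf⟩ := exists_injective_of_sep (mem_cogen_iff.mp h.1).2
  have hpi : ModuleCat.of Λ (Fin n → U) ∈ Cogen Λ U :=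
    mem_cogen_iff.mpr ⟨finite_pi U n, sep_of_mem_addOf (pi_mem_addOf U n)⟩
  obtain ⟨r, hr⟩ := h.2 _ hpi f hf
  exact ⟨n, f, r, hr⟩

/-- The core of the description of `X`: if `U ≅ X ⊕ V` is basic, `X` is split injective in
`Cogen U` and no indecomposable summand of `X` is cogenerated by `V`, then deleting from
`I_s(Cogen U)` all summands in `Cogen V` leaves `X`.  Here `I_s(Cogen U) = X ⊕ V₁`, with `V₁` the
largest split injective summand of `V`. -/
theorem exists_minSplitInj {U X V : Mdl Λ} (hUf : Module.Finite Λ U) (hU : IsBasic Λ U)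
    (e : IsoM Λ U (dsum Λ X V)) (hX : SplitInjIn Λ (Cogen Λ U) X)
    (hXV : ∀ Y, Indec Λ Y → IsSummand Λ Y X → Y ∉ Cogen Λ V) :
    ∃ I : Mdl Λ, IsMinSplitInj Λ (Cogen Λ U) I ∧ IsDeleted Λ I (Cogen Λ V) X := by
  have hV : IsSummand Λ V U := summand_trans (summand_right X V) (summand_of_iso e.symm.some)
  have hVf := finite_of_summand hV hUf
  obtain ⟨V₁, V₂, ⟨e'⟩, h₁, h₂⟩ := exists_split_off (SplitInjIn Λ (Cogen Λ U))
    (fun _ => splitInj_zero) (fun _ _ => splitInj_dsum) V hVf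
  let I := dsum Λ X V₁
  have hI : SplitInjIn Λ (Cogen Λ U) I := splitInj_dsum hX h₁
  have eI : U ≃ₗ[Λ] dsum Λ I V₂ :=
    (e.some.trans ((LinearEquiv.refl Λ X).prodCongr e')).trans (LinearEquiv.prodAssoc Λ X V₁ V₂).symm
  have hIU : IsSummand Λ I U := summand_trans (summand_left I V₂) (summand_of_iso eI.symm)
  refine ⟨I, ⟨basic_of_summand hIU hU, ?_⟩, V₁, ⟨LinearEquiv.refl Λ I⟩, fun Y _ hY => ?_, hXV⟩
  · apply Set.Subset.antisymm
    · intro M hM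
      exact addOf_induction (SplitInjIn Λ (Cogen Λ U)) (fun _ => splitInj_zero)
        (fun _ _ => splitInj_dsum) (fun _ _ h h' => splitInj_summand h' h) hI hM
    · intro S hS
      have hSf : Module.Finite Λ S := hS.1.1
      refine indec_induction (· ∈ addOf Λ I) (fun A B h hA => ?_) (fun Z hZ => ?_)
        (fun A B => addOf_dsum) S hSf fun Y hY hYS => ?_
      · exact addOf_of_summand (summand_of_iso h.symm.some) hA
      · have : Subsingleton Z := hZ
        exact ⟨0, 0, 0, LinearMap.ext fun x => Subsingleton.elim _ _⟩
      · have hYf := finite_of_summand hYS hSf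
        have hYs := splitInj_summand hS hYS
        obtain ⟨n, hn⟩ := addOf_of_splitInj hYs hUf
        have hYU := summand_trans (hY.summand_of_pi hYf hn) (summand_of_iso eI)
        rcases hY.summand_of_dsum hYf hYU with h | h
        · exact addOf_of_summand h (self_mem_addOf I)
        · exact absurd hYs (h₂ Y hY h)
  · exact cogen_of_summand
      (summand_trans hY (summand_trans (summand_left V₁ V₂) (summand_of_iso e'.symm))) hVf

end SplitInjective

/-! ### The torsion pair `(⊥U, Cogen U)` and the class `(τ⁻¹U)^⊥` -/

section TorsionPairs

variable {Λ : Type} [Ring Λ]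

theorem mem_perpL_addOf {M U : Mdl Λ} :
    M ∈ perpL Λ (addOf Λ U) ↔ Module.Finite Λ M ∧ ∀ φ : M →ₗ[Λ] U, φ = 0 := by
  refine ⟨fun h => ⟨h.1, h.2 U (self_mem_addOf U)⟩, fun h => ⟨h.1, fun Y hY φ => ?_⟩⟩
  refine LinearMap.ext fun x => ?_
  by_contra hx
  obtain ⟨g, hg⟩ := sep_of_mem_addOf hY _ hx
  exact hg (LinearMap.congr_fun (h.2 (g.comp φ)) x)

theorem ext1Zero_of_perpTauInv [IsArtinianRing Λ] {M U : Mdl Λ} (h : M ∈ perpTauInv Λ U) :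
    Ext1Zero Λ M U :=
  h.2 M (cogen_self h.1)

theorem perpTauInv_of_summand {V U : Mdl Λ} (h : IsSummand Λ V U) :
    perpTauInv Λ U ⊆ perpTauInv Λ V :=
  fun _ hM => ⟨hM.1, fun N hN => (hM.2 N hN).of_summand h⟩

theorem mem_perpTauInv_self {U : Mdl Λ} (hU : TauInvRigid Λ U) : U ∈ perpTauInv Λ U := hU

variable [IsArtinianRing Λ]

theorem perpTauInv_of_cogen {M N U : Mdl Λ} (hM : M ∈ perpTauInv Λ U) (h : N ∈ Cogen Λ M) :
    N ∈ perpTauInv Λ U :=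
  ⟨h.1, fun L hL => hM.2 L (cogen_trans hL h)⟩

theorem perpTauInv_of_injective {M N U : Mdl Λ} (hM : M ∈ perpTauInv Λ U) (f : N →ₗ[Λ] M)
    (hf : Injective f) : N ∈ perpTauInv Λ U :=
  perpTauInv_of_cogen hM (cogen_of_injective (cogen_self hM.1) f hf)

theorem TauInvRigid.of_summand {V U : Mdl Λ} (hU : TauInvRigid Λ U) (h : IsSummand Λ V U) :
    TauInvRigid Λ V :=
  perpTauInv_of_summand h (perpTauInv_of_cogen (mem_perpTauInv_self hU) (cogen_of_summand h hU.1))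

/-- `(τ⁻¹U)^⊥` is closed under extensions; the extension is given by `q : M → D`. -/
theorem perpTauInv_ext {M D U : Mdl Λ} (hMf : Module.Finite Λ M) (q : M →ₗ[Λ] D)
    (hker : ModuleCat.of Λ (LinearMap.ker q) ∈ perpTauInv Λ U) (hD : D ∈ perpTauInv Λ U) :
    M ∈ perpTauInv Λ U := by
  refine ⟨hMf, fun N hN => ?_⟩
  have hNf : Module.Finite Λ N := hN.1
  obtain ⟨n, f, hf⟩ := exists_injective_of_sep (mem_cogen_iff.mp hN).2
  let q' : N →ₗ[Λ] (Fin n → D) := LinearMap.pi fun j => q.comp ((LinearMap.proj j).comp f)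
  let Q : Mdl Λ := ModuleCat.of Λ (LinearMap.range q')
  let q'' : N →ₗ[Λ] Q := q'.rangeRestrict
  have hQ : Q ∈ Cogen Λ D := mem_cogen_iff.mpr
    ⟨Module.Finite.of_surjective q'' q'.surjective_rangeRestrict,
      (sep_of_mem_addOf (pi_mem_addOf D n)).of_injective (LinearMap.range q').subtype
        Subtype.val_injective⟩
  have hK : ModuleCat.of Λ (LinearMap.ker q'') ∈ Cogen Λ (ModuleCat.of Λ (LinearMap.ker q)) := by
    refine mem_cogen_iff.mpr ⟨inferInstanceAs (Module.Finite Λ (LinearMap.ker q'')), ?_⟩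
    rintro ⟨x, hx⟩ hx0
    have hx1 : f x ≠ 0 := fun h0 =>
      hx0 (Subtype.ext (hf (h0.trans (map_zero f).symm)))
    obtain ⟨j, hj⟩ := Function.ne_iff.mp hx1
    have hq : ∀ y : LinearMap.ker q'', q (f y.1 j) = 0 := fun y =>
      congr_fun (congrArg Subtype.val (LinearMap.mem_ker.mp y.2)) j
    let h : LinearMap.ker q'' →ₗ[Λ] LinearMap.ker q :=
      (((LinearMap.proj j).comp f).comp (LinearMap.ker q'').subtype).codRestrict _ hq
    exact ⟨h, fun h0 => hj (congrArg Subtype.val h0)⟩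
  exact Ext1Zero.of_ker q'' q'.surjective_rangeRestrict (hker.2 _ hK) (hD.2 _ hQ)

/-- The canonical sequence of the torsion pair `(⊥U, Cogen U)` for `τ⁻¹`-rigid `U`: the torsion
part is `ker q`, the intersection of the kernels of all maps `M → U`. -/
theorem exists_torsion {U : Mdl Λ} (hU : TauInvRigid Λ U) (M : Mdl Λ) (hM : Module.Finite Λ M) :
    ∃ (D : Mdl Λ) (q : M →ₗ[Λ] D), Surjective q ∧ D ∈ Cogen Λ U ∧
      ModuleCat.of Λ (LinearMap.ker q) ∈ perpL Λ (addOf Λ U) := by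
  let L : Submodule Λ M := ⨅ f : M →ₗ[Λ] U, LinearMap.ker f
  have hLf : ∀ f : M →ₗ[Λ] U, L ≤ LinearMap.ker f := fun f => iInf_le _ f
  let D : Mdl Λ := ModuleCat.of Λ (M ⧸ L)
  let q : M →ₗ[Λ] D := L.mkQ
  have hq : Surjective q := L.mkQ_surjective
  have hD : D ∈ Cogen Λ U := by
    refine mem_cogen_iff.mpr ⟨Module.Finite.of_surjective q hq, fun x hx => ?_⟩
    obtain ⟨x, rfl⟩ := hq x
    have hxL : x ∉ L := fun h => hx ((Submodule.Quotient.mk_eq_zero L).mpr h)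
    obtain ⟨f, hf⟩ : ∃ f : M →ₗ[Λ] U, f x ≠ 0 := by
      by_contra! hcon
      exact hxL ((Submodule.mem_iInf _).mpr hcon)
    exact ⟨L.liftQ f (hLf f), hf⟩
  refine ⟨D, q, hq, hD, mem_perpL_addOf.mpr
    ⟨inferInstanceAs (Module.Finite Λ (LinearMap.ker q)), fun φ => ?_⟩⟩
  obtain ⟨ψ, hψ⟩ := (hU.2 D hD).extend q hq φ
  refine LinearMap.ext fun x => ?_
  have hx : (x : M) ∈ L := (Submodule.Quotient.mk_eq_zero L).mp x.2
  exact (hψ x).symm.trans (hLf ψ hx)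

/-- If `W` lies between `J(V) = (τ⁻¹V)^⊥ ∩ ⊥V` and `(τ⁻¹V)^⊥`, then
`(((τ⁻¹V)^⊥ ∩ ⊥U)^⊥ ∩ W) * Cogen V = Cogen U` for `U` a `τ⁻¹`-rigid module with summand `V`. -/
theorem starProd_eq_cogen {U V : Mdl Λ} (hU : TauInvRigid Λ U) (hVU : IsSummand Λ V U)
    {W : Set (Mdl Λ)} (hW₁ : perpTauInv Λ V ∩ perpL Λ (addOf Λ V) ⊆ W)
    (hW₂ : W ⊆ perpTauInv Λ V) :
    starProd Λ (perpR Λ (perpTauInv Λ V ∩ perpL Λ (addOf Λ U)) ∩ W) (Cogen Λ V) =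
      Cogen Λ U := by
  have hV := hU.of_summand hVU
  apply Set.Subset.antisymm
  · rintro E ⟨A, B, ⟨hA, hAW⟩, hB, f, g, hs⟩
    have hAf : Module.Finite Λ A := hA.1
    have hBf : Module.Finite Λ B := hB.1
    have hAU : A ∈ Cogen Λ U := by
      obtain ⟨D, q, hq, hD, hker⟩ := exists_torsion hU A hAf
      have hT := perpTauInv_of_injective (N := ModuleCat.of Λ (LinearMap.ker q)) (hW₂ hAW)
        (LinearMap.ker q).subtype Subtype.val_injective
      have h0 := hA.2 _ ⟨hT, hker⟩ (LinearMap.ker q).subtype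
      refine cogen_of_injective hD q ?_
      rw [← LinearMap.ker_eq_bot, eq_bot_iff]
      intro x hx
      exact LinearMap.congr_fun h0 ⟨x, hx⟩
    have hBU : B ∈ Cogen Λ U := cogen_trans hB (cogen_of_summand hVU hU.1)
    refine mem_cogen_iff.mpr ⟨?_, fun x hx => ?_⟩
    · obtain ⟨hf, hg, hfg⟩ := hs
      have : Module.Finite Λ (LinearMap.ker g) := by
        rw [← hfg]
        infer_instance
      have : Module.Finite Λ (E ⧸ LinearMap.ker g) :=
        Module.Finite.equiv (g.quotKerEquivOfSurjective hg).symm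
      exact Module.Finite.of_submodule_quotient (LinearMap.ker g)
    · by_cases hgx : g x = 0
      · have : x ∈ LinearMap.range f := hs.2.2 ▸ hgx
        obtain ⟨a, rfl⟩ := this
        have ha : a ≠ 0 := fun h => hx (by rw [h, map_zero])
        obtain ⟨φ, hφ⟩ := (mem_cogen_iff.mp hAU).2 a ha
        obtain ⟨ψ, hψ⟩ := (hU.2 B hBU).extend_ses hs φ
        exact ⟨ψ, by rwa [hψ]⟩
      · obtain ⟨φ, hφ⟩ := (mem_cogen_iff.mp hBU).2 _ hgx
        exact ⟨φ.comp g, hφ⟩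
  · intro E hE
    have hEf : Module.Finite Λ E := hE.1
    obtain ⟨D, q, hq, hD, hker⟩ := exists_torsion hV E hEf
    let A : Mdl Λ := ModuleCat.of Λ (LinearMap.ker q)
    have hEV : E ∈ perpTauInv Λ V :=
      perpTauInv_of_summand hVU (perpTauInv_of_cogen (mem_perpTauInv_self hU) hE)
    have hAV : A ∈ perpTauInv Λ V :=
      perpTauInv_of_injective hEV (LinearMap.ker q).subtype Subtype.val_injective
    have hAU : A ∈ Cogen Λ U :=
      cogen_of_injective hE (LinearMap.ker q).subtype Subtype.val_injective
    refine ⟨A, D, ⟨⟨hAU.1, fun Y hY φ => ?_⟩, hW₁ ⟨hAV, hker⟩⟩, hD, (LinearMap.ker q).subtype, q,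
      Subtype.val_injective, hq, Submodule.range_subtype _⟩
    refine LinearMap.ext fun y => ?_
    by_contra hy
    obtain ⟨h, hh⟩ := (mem_cogen_iff.mp hAU).2 _ hy
    exact hh (LinearMap.congr_fun ((mem_perpL_addOf.mp hY.2).2 (h.comp φ)) y)

end TorsionPairs

/-! ### Bounds for `W_L` -/

section WideSubcategory

variable {Λ : Type} [Ring Λ]

/-- For `A ∈ W_L(D)`, kernels of maps from `D` to powers of `A` lie in `D`.  The kernel is given as
an injection `k : L → Y` with the right range. -/
theorem ker_pi_mem {D : Set (Mdl Λ)} (hD : ∀ M N, IsoM Λ M N → M ∈ D → N ∈ D) {A : Mdl Λ}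
    (hA : A ∈ WL Λ D) {n : ℕ} {Y : Mdl Λ} (hY : Y ∈ D) (f : Y →ₗ[Λ] (Fin n → A)) {L : Mdl Λ}
    (k : L →ₗ[Λ] Y) (hk : Injective k) (hkf : LinearMap.range k = LinearMap.ker f) :
    L ∈ D := by
  induction n generalizing Y with
  | zero =>
    have hs : Surjective k := fun y => by
      have : y ∈ LinearMap.range k := hkf ▸ LinearMap.mem_ker.mpr (Subsingleton.elim _ _)
      exact this
    exact hD _ _ ⟨(LinearEquiv.ofBijective k ⟨hk, hs⟩).symm⟩ hY
  | succ n ih =>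
    let f₀ : Y →ₗ[Λ] A := (LinearMap.proj 0).comp f
    have hfk : ∀ x, f (k x) = 0 := fun x => by
      have : k x ∈ LinearMap.ker f := hkf ▸ ⟨x, rfl⟩
      exact this
    let k' : L →ₗ[Λ] LinearMap.ker f₀ := k.codRestrict _ fun x => congr_fun (hfk x) 0
    refine ih (hA.2 Y hY f₀) ((LinearMap.pi fun j => (LinearMap.proj j.succ).comp f).comp
      (LinearMap.ker f₀).subtype) k' (fun a b hab => hk (congrArg Subtype.val hab)) ?_
    apply le_antisymm
    · rintro _ ⟨x, rfl⟩
      exact funext fun j => congr_fun (hfk x) j.succ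
    · rintro ⟨y, hy⟩ hy'
      have hfy : f y = 0 := by
        refine funext fun j => ?_
        refine Fin.cases hy (fun j => ?_) j
        exact congr_fun hy' j
      have : y ∈ LinearMap.range k := hkf ▸ hfy
      obtain ⟨x, rfl⟩ := this
      exact ⟨x, rfl⟩

variable [IsArtinianRing Λ]

/-- `J(V) ⊆ W_L((τ⁻¹V')^⊥ ∩ ⊥V)` for a summand `V'` of `V`. -/
theorem perp_subset_WL {V V' : Mdl Λ} (h : IsSummand Λ V' V) :
    perpTauInv Λ V ∩ perpL Λ (addOf Λ V) ⊆ WL Λ (perpTauInv Λ V' ∩ perpL Λ (addOf Λ V)) := by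
  rintro Z ⟨hZ, hZ'⟩
  refine ⟨⟨perpTauInv_of_summand h hZ, hZ'⟩, fun Y hY f => ?_⟩
  have hK := perpTauInv_of_injective (N := ModuleCat.of Λ (LinearMap.ker f)) hY.1
    (LinearMap.ker f).subtype Subtype.val_injective
  refine ⟨hK, mem_perpL_addOf.mpr ⟨hK.1, fun φ => ?_⟩⟩
  -- A map `ker f → V` extends to `Y` because `Ext¹(im f, V) = 0`, and `Hom(Y, V) = 0`.
  have hR := ext1Zero_of_perpTauInv (perpTauInv_of_injective
    (N := ModuleCat.of Λ (LinearMap.range f)) hZ (LinearMap.range f).subtype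
    Subtype.val_injective)
  have hle : LinearMap.ker f.rangeRestrict ≤ LinearMap.ker f := f.ker_rangeRestrict.le
  obtain ⟨ψ, hψ⟩ := hR.extend (E := Y) f.rangeRestrict f.surjective_rangeRestrict
    (φ.comp (Submodule.inclusion hle))
  have hψ0 := (mem_perpL_addOf.mp hY.2).2 ψ
  refine LinearMap.ext fun x => ?_
  have hx : (x : Y) ∈ LinearMap.ker f.rangeRestrict := f.ker_rangeRestrict.ge x.2
  have h1 := hψ ⟨x, hx⟩
  rw [hψ0] at h1
  exact h1.symm

/-- Let `V ≅ P ⊕ V'` be `τ⁻¹`-rigid with `P` split injective in `Cogen V`.  Then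
`W_L((τ⁻¹V')^⊥ ∩ ⊥V) ⊆ (τ⁻¹V)^⊥`.  Take `A` in the left hand side, a torsion module `Z` embedded
in a power of `A`, and an extension `E` of `Z` by `P`.  The torsion part `Y` of `E` meets `P` in the
kernel of `Y → Z`, which is torsion because `A` lies in `W_L`, and hence is `0` as a submodule of
`P`.  So `P` embeds into the torsion-free part of `E` and, being split injective, splits off. -/
theorem WL_subset_perpTauInv {V V' P : Mdl Λ} (hV : TauInvRigid Λ V)
    (e : IsoM Λ V (dsum Λ P V')) (hP : SplitInjIn Λ (Cogen Λ V) P) :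
    WL Λ (perpTauInv Λ V' ∩ perpL Λ (addOf Λ V)) ⊆ perpTauInv Λ V := by
  intro A hA
  obtain ⟨e⟩ := e
  have hPV : IsSummand Λ P V := summand_trans (summand_left P V') (summand_of_iso e.symm)
  have hV'V : IsSummand Λ V' V := summand_trans (summand_right P V') (summand_of_iso e.symm)
  have hAV' : A ∈ perpTauInv Λ V' := hA.1.1
  refine ⟨hAV'.1, fun N hN => ?_⟩
  have hNf : Module.Finite Λ N := hN.1
  -- The summand `V'` of `V` is covered by `A ∈ (τ⁻¹V')^⊥`; only `Ext¹(N, P) = 0` is left.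
  suffices hNP : Ext1Zero Λ N P from
    (hNP.dsum (hAV'.2 N hN)).of_summand (summand_of_iso e)
  obtain ⟨T, q, hq, hT, hker⟩ := exists_torsion hV N hNf
  let Z : Mdl Λ := ModuleCat.of Λ (LinearMap.ker q)
  refine Ext1Zero.of_ker q hq ?_ ((hV.2 T hT).of_summand hPV)
  change Ext1Zero Λ Z P
  have hZA : Z ∈ Cogen Λ A :=
    cogen_of_injective hN (LinearMap.ker q).subtype Subtype.val_injective
  have hZf : Module.Finite Λ Z := hZA.1
  obtain ⟨n, ι, hι⟩ := exists_injective_of_sep (mem_cogen_iff.mp hZA).2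
  refine Ext1Zero.of_extend fun E f g hs => ?_
  obtain ⟨hf, hg, hfg⟩ := hs
  have hPf : Module.Finite Λ P := hP.1.1
  have hgf : ∀ u, g (f u) = 0 := fun u => by
    have : f u ∈ LinearMap.ker g := hfg ▸ ⟨u, rfl⟩
    exact this
  let eP := LinearEquiv.ofInjective f hf
  let j : LinearMap.ker g →ₗ[Λ] P :=
    eP.symm.toLinearMap.comp (Submodule.inclusion hfg.ge)
  have hj : Injective j := eP.symm.injective.comp (Submodule.inclusion_injective _)
  have hEf : Module.Finite Λ E := by
    have : Module.Finite Λ (LinearMap.ker g) := Module.Finite.of_injective j hj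
    have : Module.Finite Λ (E ⧸ LinearMap.ker g) :=
      Module.Finite.equiv (g.quotKerEquivOfSurjective hg).symm
    exact Module.Finite.of_submodule_quotient (LinearMap.ker g)
  have hPV' : P ∈ perpTauInv Λ V' :=
    perpTauInv_of_summand hV'V (perpTauInv_of_cogen (mem_perpTauInv_self hV) hP.1)
  have hEV' : E ∈ perpTauInv Λ V' := perpTauInv_ext hEf g
    (perpTauInv_of_injective (N := ModuleCat.of Λ (LinearMap.ker g)) hPV' j hj)
    (perpTauInv_of_cogen hAV' hZA)
  obtain ⟨D, p, hp, hD, hYt⟩ := exists_torsion hV E hEf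
  let Y : Mdl Λ := ModuleCat.of Λ (LinearMap.ker p)
  have hY : Y ∈ perpTauInv Λ V' ∩ perpL Λ (addOf Λ V) :=
    ⟨perpTauInv_of_injective hEV' (LinearMap.ker p).subtype Subtype.val_injective, hYt⟩
  let gY : Y →ₗ[Λ] Z := g.comp (LinearMap.ker p).subtype
  have hKD : ModuleCat.of Λ (LinearMap.ker gY) ∈ perpTauInv Λ V' ∩ perpL Λ (addOf Λ V) := by
    refine ker_pi_mem ?_ hA hY (ι.comp gY) (LinearMap.ker gY).subtype Subtype.val_injective ?_
    · rintro M M' ⟨eM⟩ ⟨hM, hM'⟩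
      have hM2 := perpTauInv_of_injective hM eM.symm.toLinearMap eM.symm.injective
      refine ⟨hM2, mem_perpL_addOf.mpr ⟨hM2.1, fun φ => LinearMap.ext fun x => ?_⟩⟩
      have := LinearMap.congr_fun ((mem_perpL_addOf.mp hM').2 (φ.comp eM.toLinearMap)) (eM.symm x)
      simpa using this
    · rw [Submodule.range_subtype, LinearMap.ker_comp_of_ker_eq_bot _ (LinearMap.ker_eq_bot.mpr hι)]
  -- `ker gY = P ∩ ker p` is torsion and embeds into `V`.
  obtain ⟨i, r, hir⟩ := hPV
  have hi : Injective i := LeftInverse.injective (g := r) (LinearMap.congr_fun hir)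
  have hinj : Injective (p.comp f) := by
    rw [← LinearMap.ker_eq_bot, eq_bot_iff]
    intro u hu
    let y : LinearMap.ker gY := ⟨⟨f u, hu⟩, hgf u⟩
    let κ : LinearMap.ker gY →ₗ[Λ] LinearMap.ker g :=
      ((LinearMap.ker p).subtype.comp (LinearMap.ker gY).subtype).codRestrict _ fun x => x.2
    have h0 := LinearMap.congr_fun ((mem_perpL_addOf.mp hKD.2).2 (i.comp (j.comp κ))) y
    have h1 : j (κ y) = 0 := hi (h0.trans (map_zero i).symm)
    have h2 : κ y = 0 := hj (h1.trans (map_zero j).symm)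
    have h3 : f u = 0 := congrArg Subtype.val h2
    exact hf (h3.trans (map_zero f).symm)
  obtain ⟨s, hs⟩ := hP.2 D hD (p.comp f) hinj
  exact ⟨s.comp p, LinearMap.congr_fun hs⟩

end WideSubcategory

end Paper

namespace Paper

/-! ### The classes `F k` of a cogen-preordered module -/

section Assembly

variable {Λ : Type} [Ring Λ]

/-- `Δ_{≥k} ≅ X k ⊕ Δ_{>k}`. -/
theorem seqSum_iso (X : ℕ → Mdl Λ) {k m : ℕ} (hk : k ≤ m) :
    IsoM Λ (seqSum Λ X k m) (dsum Λ (X k) (seqSum Λ X (k + 1) m)) := by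
  have hmem : k ∈ Finset.Icc k m := Finset.mem_Icc.mpr ⟨le_rfl, hk⟩
  have hmem' : ∀ j : Finset.Icc (k + 1) m, j.1 ∈ Finset.Icc k m := fun j =>
    Finset.Icc_subset_Icc_left (Nat.le_succ k) j.2
  let φ : ((j : Finset.Icc k m) → X j.1) →ₗ[Λ] X k × ((j : Finset.Icc (k + 1) m) → X j.1) :=
    (LinearMap.proj (⟨k, hmem⟩ : Finset.Icc k m)).prod
      (LinearMap.pi fun j => LinearMap.proj (⟨j.1, hmem' j⟩ : Finset.Icc k m))
  have hφ₁ : ∀ f, (φ f).1 = f ⟨k, hmem⟩ := fun f => rfl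
  have hφ₂ : ∀ f j, (φ f).2 j = f ⟨j.1, hmem' j⟩ := fun f j => rfl
  have hlt : ∀ j : Finset.Icc k m, k ≠ j.1 → j.1 ∈ Finset.Icc (k + 1) m := fun j hj => by
    have := Finset.mem_Icc.mp j.2
    exact Finset.mem_Icc.mpr ⟨by omega, this.2⟩
  refine ⟨LinearEquiv.ofBijective φ ⟨?_, ?_⟩⟩
  · intro f g hfg
    funext j
    by_cases hj : k = j.1
    · obtain ⟨j, hjm⟩ := j
      obtain rfl : k = j := hj
      rw [← hφ₁ f, hfg, hφ₁]
    · rw [← hφ₂ f ⟨j.1, hlt j hj⟩, hfg, hφ₂]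
  · rintro ⟨a, g⟩
    refine ⟨fun j => if h : k = j.1 then h ▸ a else g ⟨j.1, hlt j h⟩, Prod.ext ?_ (funext fun j => ?_)⟩
    · rw [hφ₁]
      simp
    · rw [hφ₂]
      have := Finset.mem_Icc.mp j.2
      rw [dif_neg (show k ≠ j.1 by omega)]

theorem seqSum_summand (X : ℕ → Mdl Λ) {k m : ℕ} (hk : k ≤ m) :
    IsSummand Λ (seqSum Λ X (k + 1) m) (seqSum Λ X k m) :=
  summand_trans (summand_right _ _) (summand_of_iso (seqSum_iso X hk).symm.some)

theorem seqSum_summand_one (X : ℕ → Mdl Λ) {k m : ℕ} (h1 : 1 ≤ k) (hk : k ≤ m + 1) :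
    IsSummand Λ (seqSum Λ X k m) (seqSum Λ X 1 m) := by
  induction k, h1 using Nat.le_induction with
  | base => exact ⟨LinearMap.id, LinearMap.id, rfl⟩
  | succ k _ ih => exact summand_trans (seqSum_summand X (by omega)) (ih (by omega))

theorem isZeroM_seqSum (X : ℕ → Mdl Λ) (m : ℕ) : IsZeroM Λ (seqSum Λ X (m + 1) m) := by
  have : IsEmpty (Finset.Icc (m + 1) m) := ⟨fun j => by
    have := Finset.mem_Icc.mp j.2
    omega⟩
  exact inferInstanceAs (Subsingleton ((j : Finset.Icc (m + 1) m) → X j.1))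

theorem cogen_zero [IsArtinianRing Λ] {Z : Mdl Λ} (hZ : IsZeroM Λ Z) :
    Cogen Λ Z = zeroSubcat Λ := by
  have : Subsingleton Z := hZ
  ext M
  constructor
  · intro h
    refine ⟨fun x y => sub_eq_zero.mp ?_⟩
    by_contra hxy
    obtain ⟨g, hg⟩ := (mem_cogen_iff.mp h).2 _ hxy
    exact hg (Subsingleton.elim _ _)
  · intro h
    exact (splitInj_zero (U := Z) h).1

theorem perpTauInv_zero {Z M : Mdl Λ} (hZ : IsZeroM Λ Z) (hM : Module.Finite Λ M) :
    M ∈ perpTauInv Λ Z := by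
  have : Subsingleton Z := hZ
  exact ⟨hM, fun N _ => Ext1Zero.of_extend fun E f g _ => ⟨0, fun u => Subsingleton.elim _ _⟩⟩

variable {m : ℕ} {X : ℕ → Mdl Λ}

theorem CogenPreordered.basic (hX : CogenPreordered Λ m X) {k : ℕ} (h1 : 1 ≤ k)
    (hk : k ≤ m + 1) : IsBasic Λ (seqSum Λ X k m) :=
  basic_of_summand (seqSum_summand_one X h1 hk) hX.1

variable [IsArtinianRing Λ]

theorem CogenPreordered.rigid (hX : CogenPreordered Λ m X) {k : ℕ} (h1 : 1 ≤ k)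
    (hk : k ≤ m + 1) : TauInvRigid Λ (seqSum Λ X k m) :=
  hX.2.1.of_summand (seqSum_summand_one X h1 hk)

/-- An indecomposable summand `Y` of `X k` has a complement `W` in `Δ_{≥k}` that does not cogenerate
it and has `Δ_{>k}` as a direct summand. -/
theorem CogenPreordered.exists_complement (hX : CogenPreordered Λ m X) {k : ℕ} (h1 : 1 ≤ k)
    (hk : k ≤ m) {Y : Mdl Λ} (hY : Indec Λ Y) (hYX : IsSummand Λ Y (X k)) :
    ∃ W : Mdl Λ, IsoM Λ (seqSum Λ X k m) (dsum Λ W Y) ∧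
      IsSummand Λ (seqSum Λ X (k + 1) m) W ∧ Y ∉ Cogen Λ W := by
  obtain ⟨e⟩ := seqSum_iso X hk
  obtain ⟨D, ⟨d⟩⟩ := isSummand_dsum hYX
  let V := seqSum Λ X (k + 1) m
  have i : IsoM Λ (seqSum Λ X k m) (dsum Λ (dsum Λ D V) Y) := by
    let d' : (X k × V) ≃ₗ[Λ] ((Y × D) × V) := d.prodCongr (LinearEquiv.refl Λ V)
    exact ⟨e.trans (d'.trans ((LinearEquiv.prodAssoc Λ Y D V).trans
      (LinearEquiv.prodComm Λ Y (D × V))))⟩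
  exact ⟨dsum Λ D V, i, summand_right _ _, hX.2.2 k h1 hk Y hY hYX _
    (isDeleted_of_basic (hX.basic h1 (by omega)) (hX.rigid h1 (by omega)).1 hY i)⟩

theorem CogenPreordered.not_cogen (hX : CogenPreordered Λ m X) {k : ℕ} (h1 : 1 ≤ k)
    (hk : k ≤ m) {Y : Mdl Λ} (hY : Indec Λ Y) (hYX : IsSummand Λ Y (X k)) :
    Y ∉ Cogen Λ (seqSum Λ X (k + 1) m) := by
  obtain ⟨W, i, hVW, hYW⟩ := hX.exists_complement h1 hk hY hYX
  have hWf := finite_of_summand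
    (summand_trans (summand_left W Y) (summand_of_iso i.symm.some)) (hX.rigid h1 (by omega)).1
  exact fun h => hYW (cogen_trans h (cogen_of_summand hVW hWf))

theorem CogenPreordered.splitInj (hX : CogenPreordered Λ m X)
    (hend : ∀ Y : Mdl Λ, Module.Finite Λ Y → IsArtinianRing (Module.End Λ Y)) {k : ℕ}
    (h1 : 1 ≤ k) (hk : k ≤ m) : SplitInjIn Λ (Cogen Λ (seqSum Λ X k m)) (X k) := by
  have hUf := (hX.rigid h1 (by omega : k ≤ m + 1)).1
  have hXf : Module.Finite Λ (X k) := finite_of_summand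
    (summand_trans (summand_left _ _) (summand_of_iso (seqSum_iso X hk).symm.some)) hUf
  refine indec_induction (SplitInjIn Λ (Cogen Λ (seqSum Λ X k m)))
    (fun A B => splitInj_iso) (fun Z => splitInj_zero) (fun A B => splitInj_dsum) (X k) hXf
    fun Y hY hYX => ?_
  obtain ⟨W, i, -, hYW⟩ := hX.exists_complement h1 hk hY hYX
  have := hend Y (finite_of_summand hYX hXf)
  exact splitInj_of_not_cogen hUf hY i hYW

/-- The bounds `J(Δ_{>k}) ⊆ W_L(C(-k)) ⊆ (τ⁻¹Δ_{>k})^⊥`. -/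
theorem WL_bounds (hX : CogenPreordered Λ m X)
    (hend : ∀ Y : Mdl Λ, Module.Finite Λ Y → IsArtinianRing (Module.End Λ Y))
    {C : ℤ → Set (Mdl Λ)} (hrel : PhiRel Λ m X C) {k : ℕ} (hk : k ≤ m) :
    perpTauInv Λ (seqSum Λ X (k + 1) m) ∩ perpL Λ (addOf Λ (seqSum Λ X (k + 1) m)) ⊆
        WL Λ (C (-(k : ℤ))) ∧
      WL Λ (C (-(k : ℤ))) ⊆ perpTauInv Λ (seqSum Λ X (k + 1) m) := by
  rcases hk.lt_or_eq with hlt | rfl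
  · have hC := hrel.2.1 (-(k : ℤ)) (by omega) (by omega)
    rw [show (2 - -(k : ℤ)).toNat = k + 1 + 1 by omega,
      show (1 - -(k : ℤ)).toNat = k + 1 by omega] at hC
    rw [hC]
    exact ⟨perp_subset_WL (seqSum_summand X hlt),
      WL_subset_perpTauInv (hX.rigid (by omega) (by omega)) (seqSum_iso X hlt)
        (hX.splitInj hend (by omega) hlt)⟩
  · rw [hrel.2.2 _ le_rfl]
    exact ⟨fun M hM => ⟨hM.1.1, fun Y hY f =>
        have : Module.Finite Λ Y := hY
        finite_of_injective hY (LinearMap.ker f).subtype Subtype.val_injective⟩,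
      fun M hM => perpTauInv_zero (isZeroM_seqSum X k) hM.1⟩

/-- The classes defined by reverse induction are `F k = Cogen Δ_{≥k}`. -/
theorem eq_cogen (hX : CogenPreordered Λ m X)
    (hend : ∀ Y : Mdl Λ, Module.Finite Λ Y → IsArtinianRing (Module.End Λ Y))
    {C : ℤ → Set (Mdl Λ)} (hrel : PhiRel Λ m X C)
    {F : ℕ → Set (Mdl Λ)} (hF1 : F (m + 1) = zeroSubcat Λ)
    (hF2 : ∀ k, 1 ≤ k → k ≤ m →
      F k = starProd Λ (perpR Λ (C (1 - (k : ℤ))) ∩ WL Λ (C (-(k : ℤ)))) (F (k + 1)))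
    {k : ℕ} (h1 : 1 ≤ k) (hk : k ≤ m + 1) : F k = Cogen Λ (seqSum Λ X k m) := by
  induction hk using Nat.decreasingInduction with
  | self => rw [hF1, cogen_zero (isZeroM_seqSum X m)]
  | of_succ k hk ih =>
    have hC := hrel.2.1 (1 - (k : ℤ)) (by omega) (by omega)
    rw [show (2 - (1 - (k : ℤ))).toNat = k + 1 by omega,
      show (1 - (1 - (k : ℤ))).toNat = k by omega] at hC
    obtain ⟨hW₁, hW₂⟩ := WL_bounds hX hend hrel (by omega : k ≤ m)
    rw [hF2 k h1 (by omega), ih (by omega), hC]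
    exact starProd_eq_cogen (hX.rigid h1 (by omega)) (seqSum_summand X (by omega)) hW₁ hW₂

end Assembly

end Paper

open Paper in
/-- Corollary: let `(C k)_{k ∈ ℤ}` be a contravariantly finite
ICE-sequence of length `m + 1` and define `F (m+1) = 0` and, by reverse
induction, `F k = (C(1-k)^⊥ ∩ W_L(C(-k))) * F (k+1)` for `1 ≤ k ≤ m`.  Then the
cogen-preordered basic `τ⁻¹`-rigid module `(X 1, …, X m)` corresponding to
`(C k)` under the inverse of the bijection `ν ∘ φ` satisfies
`X k = I_s(F k) / F (k+1)` for all `1 ≤ k ≤ m`. -/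
theorem stmt_14 (K Λ : Type) [Field K] [Ring Λ] [Algebra K Λ] [FiniteDimensional K Λ]
    (hΛbasic : IsBasic Λ (ModuleCat.of Λ Λ))
    (m : ℕ) (C : ℤ → Set (Mdl Λ))
    (hICE : IsICESeq Λ C) (hlen : ICESeqLen Λ C (m + 1))
    (hcf : ∀ k : ℤ, ContraFin Λ (C k))
    (F : ℕ → Set (Mdl Λ)) (hF1 : F (m + 1) = zeroSubcat Λ)
    (hF2 : ∀ k, 1 ≤ k → k ≤ m →
      F k = starProd Λ (perpR Λ (C (1 - (k : ℤ))) ∩ WL Λ (C (-(k : ℤ)))) (F (k + 1)))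
    -- `(X 1, …, X m)` is the preimage of `(C k)` under the bijection `ν ∘ φ`
    (X : ℕ → Mdl Λ) (hX : CogenPreordered Λ m X) (hrel : PhiRel Λ m X C) :
    ∀ k, 1 ≤ k → k ≤ m →
      ∃ I : Mdl Λ, IsMinSplitInj Λ (F k) I ∧ IsDeleted Λ I (F (k + 1)) (X k) := by
  have : IsArtinianRing Λ := IsArtinianRing.of_finite K Λ
  have hend : ∀ Y : Mdl Λ, Module.Finite Λ Y → IsArtinianRing (Module.End Λ Y) :=
    isArtinianRing_end K
  intro k h1 hk
  rw [eq_cogen hX hend hrel hF1 hF2 h1 (by omega),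
    eq_cogen hX hend hrel hF1 hF2 (by omega : 1 ≤ k + 1) (by omega)]
  exact exists_minSplitInj (hX.rigid h1 (by omega)).1 (hX.basic h1 (by omega)) (seqSum_iso X hk)
    (hX.splitInj hend h1 hk) fun Y => hX.not_cogen h1 hk
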